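/- Fix r ≥ 1. There exists a constant C = C(c,r), independent of n, such that for all n > N(c,r) sufficiently large and uniformly in 1 ≤ k ≤ r log n, the trace kernel Q_{n,k} of the KCIP on Ω_k satisfies τ_{n,k} ≤ C n^3 (log n)^3 and 1/(1 − β_1(Q_{n,k})) ≤ C n^3 (log n)^2. -/

import Mathlib

/-!
The proof is a Poincaré inequality for the trace of the KCIP on `Ω_k`, with constant of order
`k n³` where `n = L²` (`trace_poincare`).

*Reduction to exclusion.* The trace is reversible with respect to the uniform law on `Ω_k`, and
it moves a particle to a neighbouring site (birth followed by death) with probability at least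
`c / (2 (2 + c)) / n²` (`traceKernel_move_ge`). So its Dirichlet form dominates `n⁻²` times the energy
of the dynamics in which `k` labelled particles jump to neighbouring sites while staying pairwise
non-adjacent (`energy_le_trace`), and it suffices to prove a Poincaré inequality with constant of
order `k n` for that dynamics (`poincare_labelled`), valid for `48 k² ≤ L`.

*Labelled particles.* If the rows of `X` are pairwise at distance at least two, and the rows and
columns of `Y` are far from each other and from those of `X`, then the particles of `X` can be
replaced by those of `Y` one at a time, each moving along its row and then along its new column.
The intermediate configurations splice `X` and `Y`, and splicing preserves the counting measure, so
a Cauchy–Schwarz argument along these paths has low congestion (`resample_bound`). A general `X` is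
first made row-separated: cut the torus along a horizontal strip free of particles and raise the
particles one after the other, topmost first, the particle of rank `ρ` by `2ρ` (`stretch_bound`).
For a fixed cut this map is injective and takes at most `2k²` steps, so its cost `4k⁴` is
negligible. Most `Y` are good for two given configurations (`two_good`) and most cuts are
admissible for them (`two_cuts`), so averaging over both gives the inequality.

*Conclusion.* Since `k ≤ r log n`, the inverse gap is `O(n³ log n)`, within the required
`O(n³ (log n)²)`. The trace is lazy because `p ≤ 1/2`, and `|Ω_k| ≤ n ^ k`, so the mixing time is at
most the inverse gap times `log (8 n ^ k) = O((log n)²)` plus one (`mixingTime_le`,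
`trace_bounds`).
-/

noncomputable section
open scoped Classical
open Finset

namespace KCIP

/-! ### The two-dimensional discrete torus -/

/-- Vertices of the 2-dimensional discrete torus `Λ(L,2) = ℤ_L²`. -/
abbrev Vertex (L : ℕ) := ZMod L × ZMod L

/-- Nearest-neighbour adjacency on the torus. -/
def adj {L : ℕ} (u v : Vertex L) : Prop :=
  u - v = (1, 0) ∨ u - v = (0, 1) ∨ v - u = (1, 0) ∨ v - u = (0, 1)

/-- Distance between two elements of `ℤ_L`. -/
def zdist {L : ℕ} [NeZero L] (a b : ZMod L) : ℕ := min (a - b).val (b - a).val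

/-- Graph (ℓ¹) distance on the torus. -/
def torusDist {L : ℕ} [NeZero L] (u v : Vertex L) : ℕ :=
  zdist u.1 v.1 + zdist u.2 v.2

/-- Particle configurations on the torus: elements of `{0,1}^{Λ(L,2)}`. -/
abbrev Config (L : ℕ) := Vertex L → Bool

/-- Number of particles of a configuration. -/
def numParticles {L : ℕ} [NeZero L] (x : Config L) : ℕ :=
  (univ.filter fun v => x v = true).card

/-- The kinetic constraint: `v` has an occupied neighbour in `x`. -/
def hasOccNbr {L : ℕ} (x : Config L) (v : Vertex L) : Prop :=
  ∃ u, adj u v ∧ x u = true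

/-! ### Generic finite Markov chain notions -/

section Generic

variable {S : Type*} [Fintype S]

/-- Point mass at `z`. -/
def delta (z : S) : S → ℝ := fun y => if y = z then 1 else 0

/-- One step of the chain applied to a distribution. -/
def evolve (K : S → S → ℝ) (μ : S → ℝ) : S → ℝ := fun y => ∑ x, μ x * K x y

/-- Distribution after `t` steps. -/
def iterDist (K : S → S → ℝ) (μ : S → ℝ) : ℕ → S → ℝ
  | 0 => μ
  | t + 1 => evolve K (iterDist K μ t)

/-- Total variation distance. -/
def tvDist (μ ν : S → ℝ) : ℝ := (1 / 2) * ∑ x, |μ x - ν x|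

/-- Mixing time (to total variation distance `1/4`, from a worst-case starting state). -/
def mixingTime (K : S → S → ℝ) (π : S → ℝ) : ℕ :=
  sInf {t : ℕ | 0 < t ∧ ∀ x : S, tvDist (iterDist K (delta x) t) π < 1 / 4}

/-- Expectation of `g` at time `t` of the chain started at `z`. -/
def expAt (K : S → S → ℝ) (z : S) (t : ℕ) (g : S → ℝ) : ℝ :=
  ∑ y, iterDist K (delta z) t y * g y

/-- Dirichlet form of a kernel `K` reversible with respect to `π`. -/
def dirichletForm (K : S → S → ℝ) (π : S → ℝ) (f : S → ℝ) : ℝ :=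
  (1 / 2) * ∑ x, ∑ y, |f x - f y| ^ 2 * K x y * π x

/-- Variance functional. -/
def varForm (π : S → ℝ) (f : S → ℝ) : ℝ :=
  (1 / 2) * ∑ x, ∑ y, |f x - f y| ^ 2 * π x * π y

/-- Entropy functional used in the definition of the log-Sobolev constant. -/
def entForm (π : S → ℝ) (f : S → ℝ) : ℝ :=
  ∑ x, f x ^ 2 * Real.log (f x ^ 2 / ∑ y, f y ^ 2 * π y) * π x

/-- Spectral gap `1 - β₁(K)`, via its variational characterization. -/
def spectralGap (K : S → S → ℝ) (π : S → ℝ) : ℝ :=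
  sInf {r : ℝ | ∃ f : S → ℝ, varForm π f ≠ 0 ∧ r = dirichletForm K π f / varForm π f}

/-- Log-Sobolev constant `α(K)`, via its variational characterization. -/
def logSobolevConst (K : S → S → ℝ) (π : S → ℝ) : ℝ :=
  sInf {r : ℝ | ∃ f : S → ℝ, entForm π f ≠ 0 ∧ r = dirichletForm K π f / entForm π f}

/-- Uniform distribution on a finite state space. -/
def uniformDist (S : Type*) [Fintype S] : S → ℝ := fun _ => 1 / (Fintype.card S : ℝ)

/-- Probability of being at `y` at time `t`, having avoided the set `A` at all times
`0, 1, …, t`, for the chain `K` started at `z`. -/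
def killedDist (K : S → S → ℝ) (z : S) (A : Set S) : ℕ → S → ℝ
  | 0 => fun y => if y = z ∧ y ∉ A then 1 else 0
  | t + 1 => fun y => if y ∈ A then 0 else ∑ x, killedDist K z A t x * K x y

/-- `P_z[τ_A > T]`, where `τ_A = min {t ≥ 0 : Z_t ∈ A}`. -/
def survProb (K : S → S → ℝ) (z : S) (A : Set S) (T : ℕ) : ℝ :=
  ∑ y, killedDist K z A T y

/-- `E_z[τ_A]`, where `τ_A = min {t ≥ 0 : Z_t ∈ A}`. -/
def hitTimeExp (K : S → S → ℝ) (z : S) (A : Set S) : ℝ :=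
  ∑' T : ℕ, survProb K z A T

/-- Probability that the chain started at `z` follows the trajectory `ω` up to time `T`. -/
def pathProb (K : S → S → ℝ) (z : S) (T : ℕ) (ω : Fin (T + 1) → S) : ℝ :=
  (if ω 0 = z then 1 else 0) * ∏ t : Fin T, K (ω t.castSucc) (ω t.succ)

/-- Expectation of a path functional of the trajectory up to time `T`. -/
def expPath (K : S → S → ℝ) (z : S) (T : ℕ) (f : (Fin (T + 1) → S) → ℝ) : ℝ :=
  ∑ ω : Fin (T + 1) → S, pathProb K z T ω * f ω

/-- Probability of a path event of the trajectory up to time `T`. -/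
def prPath (K : S → S → ℝ) (z : S) (T : ℕ) (E : (Fin (T + 1) → S) → Prop) : ℝ :=
  ∑ ω : Fin (T + 1) → S, if E ω then pathProb K z T ω else 0

/-- Probability of going from `x` to `z` in `t` steps, all of whose destinations
avoid the set `A`. -/
def tabooPow (K : S → S → ℝ) (A : Set S) : ℕ → S → S → ℝ
  | 0 => fun x y => if y = x then 1 else 0
  | t + 1 => fun x y => ∑ z, tabooPow K A t x z * (if y ∈ A then 0 else K z y)

/-- The transition kernel of the trace of the chain `K` on the set `A`. -/
def traceKernel (K : S → S → ℝ) (A : Set S) : {x // x ∈ A} → {x // x ∈ A} → ℝ :=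
  fun x y => ∑' t : ℕ, ∑ z, tabooPow K A t x.1 z * K z y.1

/-- A distribution `π` conditioned on the set `A`. -/
def condDist (π : S → ℝ) (A : Set S) : {x // x ∈ A} → ℝ :=
  fun x => π x.1 / ∑ y : {x // x ∈ A}, π y.1

end Generic

/-- Extend a finite trajectory to all times, by repeating the final state. -/
def extendPath {S : Type*} {T : ℕ} (ω : Fin (T + 1) → S) : ℕ → S :=
  fun t => ω ⟨min t T, Nat.lt_succ_of_le (min_le_right t T)⟩

/-- The alternating hitting times of the sets `A` and `B` along a trajectory `ω`:
`altTimes ω A B (j-1) = (τ^A(j), τ^B(j))` where `τ^A(1) = inf {t : ω t ∈ A}`,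
`τ^B(1) = inf {t : ω t ∈ B}`, `τ^A(j+1) = inf {t > τ^B(j) : ω t ∈ A}` and
`τ^B(j+1) = inf {t > τ^A(j) : ω t ∈ B}`. -/
def altTimes {S : Type*} (ω : ℕ → S) (A B : Set S) : ℕ → ℕ∞ × ℕ∞
  | 0 => (⨅ t ∈ {t : ℕ | ω t ∈ A}, (t : ℕ∞), ⨅ t ∈ {t : ℕ | ω t ∈ B}, (t : ℕ∞))
  | j + 1 =>
      (⨅ t ∈ {t : ℕ | (altTimes ω A B j).2 < (t : ℕ∞) ∧ ω t ∈ A}, (t : ℕ∞),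
       ⨅ t ∈ {t : ℕ | (altTimes ω A B j).1 < (t : ℕ∞) ∧ ω t ∈ B}, (t : ℕ∞))

/-! ### The kinetically constrained Ising process -/

/-- Transition kernel of the KCIP on `Λ(L,2)` with density `p`. -/
def kcipKernel (L : ℕ) [NeZero L] (p : ℝ) (x y : Config L) : ℝ :=
  (1 / ((L : ℝ) ^ 2)) * ∑ v : Vertex L,
    if hasOccNbr x v then
      p * (if y = Function.update x v true then 1 else 0)
        + (1 - p) * (if y = Function.update x v false then 1 else 0)
    else (if y = x then 1 else 0)

/-- Stationary distribution of the KCIP on `Λ(L,2)` with density `p`. -/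
def kcipStationary (L : ℕ) [NeZero L] (p : ℝ) (y : Config L) : ℝ :=
  if 0 < numParticles y then
    p ^ numParticles y * (1 - p) ^ (L ^ 2 - numParticles y) / (1 - (1 - p) ^ (L ^ 2))
  else 0

/-- `Ω_k`: configurations with `k` particles, no two of them adjacent. -/
def OmegaSet (L k : ℕ) [NeZero L] : Set (Config L) :=
  {x | numParticles x = k ∧ ∀ u v : Vertex L, adj u v → ¬(x u = true ∧ x v = true)}

/-- `Ω_k` as a type. -/
abbrev OmegaType (L k : ℕ) [NeZero L] := {x : Config L // x ∈ OmegaSet L k}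

/-- `Ω_k` as a finite set of configurations. -/
def omegaFinset (L k : ℕ) [NeZero L] : Finset (Config L) :=
  univ.filter fun x => x ∈ OmegaSet L k

/-- `∪_{i=1}^k Ω_i`. -/
def omegaUnionSet (L k : ℕ) [NeZero L] : Set (Config L) :=
  ⋃ i ∈ Finset.Icc 1 k, OmegaSet L i

/-- `Ω_i ∪ Ω_{i+1}` as a type. -/
abbrev PairType (L i : ℕ) [NeZero L] :=
  {x : Config L // x ∈ OmegaSet L i ∪ OmegaSet L (i + 1)}

/-- `P_i`: the restriction of the KCIP kernel to `Ω_i ∪ Ω_{i+1}`. -/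
def pairKernel (L i : ℕ) [NeZero L] (p : ℝ) : PairType L i → PairType L i → ℝ :=
  fun x y =>
    if x = y then 1 - ∑ z : PairType L i, (if z = x then 0 else kcipKernel L p x.1 z.1)
    else kcipKernel L p x.1 y.1

/-! ### The "perfect" kernel `L^{MH}_{n,k}` on `Ω_{n,k}` -/

/-- The kernel `L^{MH}_{n,k}(x,y) = 1/(2|Ω_{n,k}|) + (1/2)·1_{x=y}`. -/
def perfectKernel (L k : ℕ) [NeZero L] : OmegaType L k → OmegaType L k → ℝ :=
  fun x y => 1 / (2 * (Fintype.card (OmegaType L k) : ℝ)) + if x = y then 1 / 2 else 0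

/-! ### Bernoulli–Laplace diffusion -/

/-- Bernoulli–Laplace kernel `U'_{n,k}`: move a uniformly chosen occupied site to a
uniformly chosen unoccupied site. -/
def blKernel (L k : ℕ) [NeZero L] (x y : Config L) : ℝ :=
  (1 / ((k : ℝ) * ((L : ℝ) ^ 2 - (k : ℝ)))) * ∑ u : Vertex L, ∑ v : Vertex L,
    if x u = true ∧ x v = false ∧
        y = Function.update (Function.update x u false) v true then 1 else 0

/-- `U_{n,k} = (1/2) U'_{n,k} + (1/2) Id`. -/
def blLazy (L k : ℕ) [NeZero L] (x y : Config L) : ℝ :=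
  (1 / 2) * blKernel L k x y + (1 / 2) * (if y = x then 1 else 0)

/-- The Metropolis–Hastings kernel `U^{MH}_{n,k}` on `Ω_{n,k}` with proposal `U_{n,k}`
and target the uniform distribution on `Ω_{n,k}`. -/
def blMH (L k : ℕ) [NeZero L] : OmegaType L k → OmegaType L k → ℝ :=
  fun x y =>
    if x = y then 1 - ∑ z : OmegaType L k, (if z = x then 0 else blLazy L k x.1 z.1)
    else blLazy L k x.1 y.1

/-! ### Simple exclusion -/

/-- Swap the labels of vertices `u` and `v`. -/
def swapConfig {L : ℕ} (x : Config L) (u v : Vertex L) : Config L :=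
  Function.update (Function.update x u (x v)) v (x u)

/-- Kernel of the simple exclusion process on `Λ(L,2)`: pick a uniformly random pair of
adjacent vertices and swap their labels. -/
def seKernel (L : ℕ) [NeZero L] (x y : Config L) : ℝ :=
  (1 / ((univ.filter fun q : Vertex L × Vertex L => adj q.1 q.2).card : ℝ)) *
    ∑ u : Vertex L, ∑ v : Vertex L, if adj u v ∧ y = swapConfig x u v then 1 else 0

/-- Adjacency in the graph `G_SE` whose vertices are configurations and whose edges join
distinct configurations with positive simple-exclusion transition probability. -/
def seAdj (L : ℕ) (x y : Config L) : Prop :=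
  y ≠ x ∧ ∃ u v : Vertex L, adj u v ∧ y = swapConfig x u v

/-- `Q_SE`: the `1/2`-lazy simple random walk on the graph `G_SE`. -/
def seLazy (L : ℕ) [NeZero L] (x y : Config L) : ℝ :=
  (1 / 2) * (if y = x then 1 else 0) +
    (1 / 2) * (if seAdj L x y then 1 / ((univ.filter fun z => seAdj L x z).card : ℝ) else 0)

/-- `Q_MH`: the Metropolis–Hastings kernel on `Ω_{n,k}` with proposal `Q_SE` and target
the uniform distribution on `Ω_{n,k}`. -/
def seMH (L k : ℕ) [NeZero L] : OmegaType L k → OmegaType L k → ℝ :=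
  fun x y =>
    if x = y then 1 - ∑ z : OmegaType L k, (if z = x then 0 else seLazy L x.1 z.1)
    else seLazy L x.1 y.1

/-! ### The projected chain `P̃` -/

/-- `π`-measure of a finite set of configurations. -/
def measOf (L : ℕ) [NeZero L] (p : ℝ) (A : Finset (Config L)) : ℝ :=
  ∑ x ∈ A, kcipStationary L p x

/-- The projected kernel `P̃` on `{1, …, k-1}` (`i : Fin (k-1)` represents `i+1`):
`P̃(i,j) = π((Ω_i ∪ Ω_{i+1}) ∩ (Ω_j ∪ Ω_{j+1})) / (3 π(Ω_i ∪ Ω_{i+1}))` for `i ≠ j`. -/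
def projKernel (L k : ℕ) [NeZero L] (p : ℝ) : Fin (k - 1) → Fin (k - 1) → ℝ :=
  fun i j =>
    if i = j then
      1 - ∑ j' ∈ univ.erase i,
        measOf L p ((omegaFinset L (i.1 + 1) ∪ omegaFinset L (i.1 + 2)) ∩
            (omegaFinset L (j'.1 + 1) ∪ omegaFinset L (j'.1 + 2))) /
          (3 * measOf L p (omegaFinset L (i.1 + 1) ∪ omegaFinset L (i.1 + 2)))
    else
      measOf L p ((omegaFinset L (i.1 + 1) ∪ omegaFinset L (i.1 + 2)) ∩
          (omegaFinset L (j.1 + 1) ∪ omegaFinset L (j.1 + 2))) /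
        (3 * measOf L p (omegaFinset L (i.1 + 1) ∪ omegaFinset L (i.1 + 2)))

/-- Stationary distribution of the projected kernel `P̃`. -/
def projStationary (L k : ℕ) [NeZero L] (p : ℝ) : Fin (k - 1) → ℝ :=
  fun i =>
    measOf L p (omegaFinset L (i.1 + 1) ∪ omegaFinset L (i.1 + 2)) /
      ∑ j : Fin (k - 1), measOf L p (omegaFinset L (j.1 + 1) ∪ omegaFinset L (j.1 + 2))

/-! ### Well-spaced configurations -/

/-- `H(i)`: very well-spaced configurations in `Ω_i`. -/
def Hset (L i : ℕ) [NeZero L] : Set (Config L) :=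
  {x | x ∈ OmegaSet L i ∧ ∀ u v : Vertex L, x u = true → x v = true → u ≠ v →
    Real.sqrt ((L : ℝ) ^ 2) / Real.log ((L : ℝ) ^ 2) ^ ((1 : ℝ) / 4) < (torusDist u v : ℝ)}

/-- `G(i)`: configurations in `Ω_{i+1}` obtained from a configuration in `H(i)` by adding
one particle at distance exactly `2` from the existing particles. -/
def Gset (L i : ℕ) [NeZero L] : Set (Config L) :=
  {y | y ∈ OmegaSet L (i + 1) ∧ ∃ x ∈ Hset L i, ∃ w : Vertex L,
    y = Function.update x w true ∧ (∃ u, x u = true ∧ torusDist u w = 2) ∧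
    ∀ u, x u = true → 2 ≤ torusDist u w}

/-! ### Connectivity on the torus -/

/-- `b` is reachable from `a` by a nearest-neighbour path staying inside `A`. -/
def reachIn {L : ℕ} (A : Set (Vertex L)) (a b : Vertex L) : Prop :=
  ∃ (M : ℕ) (y : ℕ → Vertex L), y 0 = a ∧ y M = b ∧
    (∀ j < M, adj (y j) (y (j + 1))) ∧ ∀ j ≤ M, y j ∈ A

/-- A linear key on the vertices, used to pick one representative per connected component. -/
def vkey (L : ℕ) [NeZero L] (v : Vertex L) : ℕ := v.1.val * L + v.2.val

/-- The number of connected components of the subgraph of `Λ(L,2)` induced by the occupied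
vertices of `x` (counting, in each component, the vertex with the least key). -/
def connCompCount (L : ℕ) [NeZero L] (x : Config L) : ℕ :=
  (univ.filter fun v : Vertex L => x v = true ∧
    ∀ u : Vertex L, x u = true → reachIn {w : Vertex L | x w = true} u v →
      vkey L v ≤ vkey L u).card

/-- `𝒞_s`: the number of collisions before time `s` along a trajectory, i.e. of times
`1 ≤ u < s` at which the number of connected components strictly decreases. -/
def collisionCount (L : ℕ) [NeZero L] {T : ℕ} (ω : Fin (T + 1) → Config L) (s : ℕ) : ℕ :=
  ((Finset.range (s - 1)).filter fun u =>
    connCompCount L (extendPath ω (u + 1)) < connCompCount L (extendPath ω u)).card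

/-! ### Squares, coverings and open vertices -/

/-- A square of side length exactly `m` in the torus, with bottom-left corner `a`. -/
def IsSquareSet (L m : ℕ) [NeZero L] (C : Finset (Vertex L)) : Prop :=
  ∃ a : Vertex L, C = (Finset.range m ×ˢ Finset.range m).image
    fun q : ℕ × ℕ => a + ((q.1 : ZMod L), (q.2 : ZMod L))

/-- A (not necessarily disjoint) union of at most `k` squares of side length exactly `m`. -/
def IsUnionOfSquares (L m k : ℕ) [NeZero L] (C : Finset (Vertex L)) : Prop :=
  ∃ (j : ℕ) (sq : Fin j → Finset (Vertex L)), j ≤ k ∧ (∀ a, IsSquareSet L m (sq a)) ∧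
    C = Finset.univ.biUnion sq

/-- A size-`m` covering of the finite vertex set `X`. -/
structure SizeMCovering (L m : ℕ) [NeZero L] (X : Finset (Vertex L)) {ℓ : ℕ}
    (C : Fin ℓ → Finset (Vertex L)) : Prop where
  pairwise_disjoint : ∀ i j, i ≠ j → Disjoint (C i) (C j)
  union_of_squares : ∀ i, IsUnionOfSquares L m X.card (C i)
  covers : ∀ u : Vertex L, (∃ v ∈ X, torusDist u v ≤ 2) → ∃ i, u ∈ C i
  meets : ∀ i, ∃ v ∈ X, v ∈ C i

/-- The vertex `xi` of the configuration `X` is *open* with respect to the privileged point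
`x'` and the covering `C`: there is a nearest-neighbour path from `xi` to the complement of
the covering which stays at distance `> 1` from `(X ∪ {x'}) \ {xi}`. -/
def IsOpenVertex (L : ℕ) [NeZero L] (X : Finset (Vertex L)) (x' : Vertex L) {ℓ : ℕ}
    (C : Fin ℓ → Finset (Vertex L)) (xi : Vertex L) : Prop :=
  ∃ (M : ℕ) (y : ℕ → Vertex L), y 0 = xi ∧ (∀ i, y M ∉ C i) ∧
    (∀ j < M, torusDist (y (j + 1)) (y j) = 1) ∧
    ∀ x ∈ (insert x' X).erase xi, ∀ j ≤ M, 1 < torusDist x (y j)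

/-- The configuration `{xs 0, …, xs (k-1)}` admits a *sequence of open vertices* with
respect to the privileged point `x'` and the covering `C`. -/
def HasOpenSequence (L k : ℕ) [NeZero L] (xs : Fin k → Vertex L) (x' : Vertex L) {ℓ : ℕ}
    (C : Fin ℓ → Finset (Vertex L)) : Prop :=
  ∃ σ : Equiv.Perm (Fin k), ∀ i : Fin k, i.1 + 1 < k →
    IsOpenVertex L
      ((univ.filter fun j : Fin k => ∀ j' : Fin k, j' < i → σ j' ≠ j).image xs)
      x' C (xs (σ i))

/-! ### Metropolis–Hastings walk on a component (for Statement 9) -/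

/-- The Metropolis–Hastings chain on `D` whose proposal is the `1/2`-lazy simple random
walk on `Λ(L,2)` and whose target is the uniform distribution on `D`: each neighbour in `D`
is moved to with probability `1/8`, otherwise the chain holds. -/
def dKernel (L : ℕ) [NeZero L] (D : Finset (Vertex L)) :
    {u // u ∈ D} → {u // u ∈ D} → ℝ :=
  fun x y =>
    if x = y then 1 - ((D.filter fun w => adj w x.1).card : ℝ) / 8
    else if adj x.1 y.1 then 1 / 8 else 0

/-! ### The trace of a reversible chain -/

section Trace

variable {S : Type*} [Fintype S]

/-- The chain killed on entering `A`, as a matrix: its powers are the taboo probabilities. -/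
def tabooMat (K : S → S → ℝ) (A : Set S) : Matrix S S ℝ :=
  Matrix.of fun z y => if y ∈ A then 0 else K z y

lemma tabooPow_eq (K : S → S → ℝ) (A : Set S) (t : ℕ) (x y : S) :
    tabooPow K A t x y = (tabooMat K A ^ t) x y := by
  induction t generalizing y with
  | zero => simp [tabooPow, Matrix.one_apply, eq_comm]
  | succ t ih =>
    rw [pow_succ, Matrix.mul_apply]
    simp only [tabooPow, ih, tabooMat, Matrix.of_apply]

/-- Probability of first entering `A` (at a positive time) at time `t + 1`, through `y`. -/
def firstEntry (K : S → S → ℝ) (A : Set S) (t : ℕ) (x y : S) : ℝ :=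
  ∑ z, tabooPow K A t x z * K z y

/-- Probability of avoiding `A` at times `1, …, t`. -/
def avoidProb (K : S → S → ℝ) (A : Set S) (t : ℕ) (x : S) : ℝ :=
  ∑ z, tabooPow K A t x z

variable {K : S → S → ℝ} {A : Set S} {π : S → ℝ}

lemma tabooPow_succ_first (t : ℕ) (x y : S) :
    tabooPow K A (t + 1) x y = ∑ z, (if z ∈ A then 0 else K x z) * tabooPow K A t z y := by
  simp only [tabooPow_eq]
  rw [pow_succ', Matrix.mul_apply]
  simp [tabooMat]

lemma tabooPow_nonneg (hK : ∀ x y, 0 ≤ K x y) (t : ℕ) (x y : S) :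
    0 ≤ tabooPow K A t x y := by
  induction t generalizing y with
  | zero => simp only [tabooPow]; split_ifs <;> norm_num
  | succ t ih =>
    simp only [tabooPow]
    refine sum_nonneg fun z _ => mul_nonneg (ih z) ?_
    split_ifs
    · exact le_rfl
    · exact hK _ _

lemma firstEntry_nonneg (hK : ∀ x y, 0 ≤ K x y) (t : ℕ) (x y : S) :
    0 ≤ firstEntry K A t x y :=
  sum_nonneg fun z _ => mul_nonneg (tabooPow_nonneg hK t x z) (hK _ _)

lemma avoidProb_nonneg (hK : ∀ x y, 0 ≤ K x y) (t : ℕ) (x : S) :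
    0 ≤ avoidProb K A t x :=
  sum_nonneg fun z _ => tabooPow_nonneg hK t x z

lemma firstEntry_zero (x y : S) : firstEntry K A 0 x y = K x y := by
  simp [firstEntry, tabooPow]

lemma firstEntry_succ (t : ℕ) (x y : S) :
    firstEntry K A (t + 1) x y = ∑ z, (if z ∈ A then 0 else K x z) * firstEntry K A t z y := by
  simp only [firstEntry, tabooPow_succ_first, sum_mul, mul_sum]
  rw [sum_comm]
  simp only [mul_assoc]

lemma avoidProb_zero (x : S) : avoidProb K A 0 x = 1 := by
  simp [avoidProb, tabooPow]

lemma avoidProb_succ_first (t : ℕ) (x : S) :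
    avoidProb K A (t + 1) x = ∑ z, (if z ∈ A then 0 else K x z) * avoidProb K A t z := by
  simp only [avoidProb, tabooPow_succ_first, mul_sum]
  rw [sum_comm]

/-- Conservation of mass: what avoids `A` up to time `t` enters it at time `t + 1` or goes on. -/
lemma avoidProb_eq (hK1 : ∀ x, ∑ y, K x y = 1) (t : ℕ) (x : S) :
    avoidProb K A t x
      = ∑ y : {y // y ∈ A}, firstEntry K A t x y.1 + avoidProb K A (t + 1) x := by
  have h1 : avoidProb K A t x = ∑ y, firstEntry K A t x y := by
    simp only [avoidProb, firstEntry]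
    rw [sum_comm]
    simp [← mul_sum, hK1]
  have h2 : avoidProb K A (t + 1) x = ∑ y, if y ∈ A then 0 else firstEntry K A t x y := by
    simp only [avoidProb, tabooPow, firstEntry]
    refine sum_congr rfl fun y _ => ?_
    split_ifs <;> simp
  have h3 : ∑ y : {y // y ∈ A}, firstEntry K A t x y.1
      = ∑ y, if y ∈ A then firstEntry K A t x y else 0 := by
    rw [← sum_filter]
    exact (sum_subtype _ (by simp) _).symm
  rw [h1, h2, h3, ← sum_add_distrib]
  refine sum_congr rfl fun y _ => ?_
  split_ifs <;> simp

lemma sum_firstEntry (hK1 : ∀ x, ∑ y, K x y = 1) (T : ℕ) (x : S) :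
    ∑ t ∈ range T, ∑ y : {y // y ∈ A}, firstEntry K A t x y.1 = 1 - avoidProb K A T x := by
  induction T with
  | zero => simp [avoidProb_zero]
  | succ T ih => rw [sum_range_succ, ih, avoidProb_eq hK1 T x]; ring

lemma summable_firstEntry (hK : ∀ x y, 0 ≤ K x y) (hK1 : ∀ x, ∑ y, K x y = 1) (x y : S)
    (hy : y ∈ A) : Summable fun t => firstEntry K A t x y := by
  refine summable_of_sum_range_le (c := 1) (fun t => firstEntry_nonneg hK t x y) fun T => ?_
  calc ∑ t ∈ range T, firstEntry K A t x y
      ≤ ∑ t ∈ range T, ∑ y : {y // y ∈ A}, firstEntry K A t x y.1 :=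
        sum_le_sum fun t _ => single_le_sum (f := fun y : {y // y ∈ A} => firstEntry K A t x y.1)
          (fun y _ => firstEntry_nonneg hK t x y.1) (mem_univ (⟨y, hy⟩ : {y // y ∈ A}))
    _ = 1 - avoidProb K A T x := sum_firstEntry hK1 T x
    _ ≤ 1 := by linarith [avoidProb_nonneg (A := A) hK T x]

lemma traceKernel_eq (x y : {x // x ∈ A}) :
    traceKernel K A x y = ∑' t, firstEntry K A t x.1 y.1 := rfl

lemma traceKernel_nonneg (hK : ∀ x y, 0 ≤ K x y) (x y : {x // x ∈ A}) :
    0 ≤ traceKernel K A x y :=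
  tsum_nonneg fun t => firstEntry_nonneg hK t x.1 y.1

lemma le_traceKernel (hK : ∀ x y, 0 ≤ K x y) (hK1 : ∀ x, ∑ y, K x y = 1)
    (x y : {x // x ∈ A}) : K x.1 y.1 ≤ traceKernel K A x y := by
  rw [traceKernel_eq, ← firstEntry_zero (K := K) (A := A) x.1 y.1]
  exact (summable_firstEntry hK hK1 x.1 y.1 y.2).le_tsum 0 fun t _ => firstEntry_nonneg hK t _ _

/-- Detailed balance passes to the trace because reversing a path does not change which of its
intermediate points lie in `A`. -/
lemma firstEntry_reversible (hrev : ∀ x y, π x * K x y = π y * K y x) (t : ℕ) (x y : S) :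
    π x * firstEntry K A t x y = π y * firstEntry K A t y x := by
  let M : Matrix S S ℝ := Matrix.of K
  let P : Matrix S S ℝ := Matrix.diagonal fun z => if z ∈ A then 0 else 1
  let D : Matrix S S ℝ := Matrix.diagonal π
  have hM : tabooMat K A = M * P := by
    ext a b
    simp [tabooMat, M, P, Matrix.mul_diagonal]
  have hF : ∀ a b, firstEntry K A t a b = ((M * P) ^ t * M) a b := by
    intro a b
    simp [firstEntry, tabooPow_eq, hM, Matrix.mul_apply, M]
  have hDM : D * M = M.transpose * D := by
    ext a b
    simp [D, M, Matrix.diagonal_mul, Matrix.mul_diagonal, hrev a b, mul_comm]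
  have hPt : P.transpose = P := Matrix.diagonal_transpose _
  have hDP : D * P = P * D := by
    simp only [D, P, Matrix.diagonal_mul_diagonal]
    congr 1; ext z; ring
  have s1 : SemiconjBy D (M * P) (M.transpose * P) := by
    change D * (M * P) = M.transpose * P * D
    rw [← mul_assoc, hDM, mul_assoc, hDP, mul_assoc]
  have s2 : SemiconjBy M.transpose (P * M.transpose) (M.transpose * P) := by
    change M.transpose * (P * M.transpose) = M.transpose * P * M.transpose
    rw [mul_assoc]
  have e1 : D * ((M * P) ^ t * M) = (M.transpose * P) ^ t * M.transpose * D := by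
    rw [← mul_assoc, (s1.pow_right t).eq, mul_assoc, hDM, mul_assoc]
  have e2 : ((M * P) ^ t * M).transpose = (M.transpose * P) ^ t * M.transpose := by
    rw [Matrix.transpose_mul, Matrix.transpose_pow, Matrix.transpose_mul, hPt,
      (s2.pow_right t).eq]
  rw [← e2] at e1
  have e3 := congrFun (congrFun e1 x) y
  simp only [D, Matrix.diagonal_mul, Matrix.mul_diagonal, Matrix.transpose_apply] at e3
  rw [hF, hF, e3, mul_comm]

lemma traceKernel_reversible (hrev : ∀ x y, π x * K x y = π y * K y x) (x y : {x // x ∈ A}) :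
    π x.1 * traceKernel K A x y = π y.1 * traceKernel K A y x := by
  simp only [traceKernel_eq, ← tsum_mul_left]
  exact tsum_congr fun t => firstEntry_reversible hrev t x.1 y.1

/-- Poincaré recurrence: started in `A`, a chain with an invariant measure charging `A` returns
to `A`. Indeed the stationary probability of leaving `A` at time `0` and avoiding it for `t`
steps is a difference of consecutive terms of a decreasing nonnegative sequence. -/
lemma tendsto_avoidProb (hK : ∀ x y, 0 ≤ K x y) (hπ : ∀ x, 0 ≤ π x)
    (hst : ∀ y, ∑ x, π x * K x y = π y) (x : S) (hx : x ∈ A) (hpos : 0 < π x) :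
    Filter.Tendsto (fun t => avoidProb K A t x) Filter.atTop (nhds 0) := by
  set s : ℕ → ℝ := fun t => ∑ x, π x * avoidProb K A t x with hs
  set u : ℕ → ℝ := fun t => ∑ x, if x ∈ A then π x * avoidProb K A t x else 0 with hu
  have hs0 : ∀ t, 0 ≤ s t := fun t =>
    sum_nonneg fun x _ => mul_nonneg (hπ x) (avoidProb_nonneg hK t x)
  have hterm : ∀ t y, 0 ≤ (if y ∈ A then π y * avoidProb K A t y else 0) := by
    intro t y
    split_ifs
    · exact mul_nonneg (hπ y) (avoidProb_nonneg hK t y)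
    · exact le_rfl
  have hus : ∀ t, u t = s t - s (t + 1) := by
    intro t
    have h1 : s (t + 1) = ∑ y, if y ∈ A then 0 else π y * avoidProb K A t y := by
      simp only [hs, avoidProb_succ_first, mul_sum]
      rw [sum_comm]
      refine sum_congr rfl fun y _ => ?_
      split_ifs
      · simp
      · rw [← hst y, sum_mul]
        exact sum_congr rfl fun x _ => by ring
    rw [h1, eq_sub_iff_add_eq]
    simp only [hu, hs, ← sum_add_distrib]
    refine sum_congr rfl fun y _ => ?_
    split_ifs <;> simp
  have hsum : Summable u := by
    refine summable_of_sum_range_le (c := s 0) (fun t => sum_nonneg fun y _ => hterm t y) fun T => ?_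
    have : ∑ t ∈ range T, u t = s 0 - s T := by
      simp only [hus]
      exact sum_range_sub' s T
    rw [this]
    linarith [hs0 T]
  have hlim : Filter.Tendsto (fun t => u t / π x) Filter.atTop (nhds 0) := by
    simpa using hsum.tendsto_atTop_zero.div_const (π x)
  refine squeeze_zero (fun t => avoidProb_nonneg hK t x) (fun t => ?_) hlim
  rw [le_div_iff₀ hpos, mul_comm]
  have := single_le_sum (f := fun y => if y ∈ A then π y * avoidProb K A t y else 0)
    (fun y _ => hterm t y) (mem_univ x)
  simpa [hx] using this

lemma traceKernel_sum (hK : ∀ x y, 0 ≤ K x y) (hK1 : ∀ x, ∑ y, K x y = 1) (hπ : ∀ x, 0 ≤ π x)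
    (hst : ∀ y, ∑ x, π x * K x y = π y) (x : {x // x ∈ A}) (hpos : 0 < π x.1) :
    ∑ y, traceKernel K A x y = 1 := by
  have h1 : HasSum (fun t => ∑ y : {y // y ∈ A}, firstEntry K A t x.1 y.1)
      (∑ y, traceKernel K A x y) :=
    hasSum_sum fun y _ => (summable_firstEntry hK hK1 x.1 y.1 y.2).hasSum
  have h2 := h1.tendsto_sum_nat
  simp only [sum_firstEntry hK1] at h2
  have h3 : Filter.Tendsto (fun T => 1 - avoidProb K A T x.1) Filter.atTop (nhds (1 - 0)) :=
    (tendsto_avoidProb hK hπ hst x.1 x.2 hpos).const_sub 1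
  simpa using tendsto_nhds_unique h2 h3

/-- A two-step excursion `x → w → y` outside `A`, with an arbitrary holding time at `w`. -/
lemma traceKernel_ge_excursion (hK : ∀ x y, 0 ≤ K x y) (hK1 : ∀ x, ∑ y, K x y = 1)
    (x y : {x // x ∈ A}) (w : S) (hw : w ∉ A) :
    K x.1 w * K w y.1 ≤ (1 - K w w) * traceKernel K A x y := by
  set H : S → ℝ := fun z => ∑' t, firstEntry K A t z y.1 with hH
  have hsum : ∀ z, Summable fun t => firstEntry K A t z y.1 :=
    fun z => summable_firstEntry hK hK1 z y.1 y.2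
  have hH0 : ∀ z, 0 ≤ H z := fun z => tsum_nonneg fun t => firstEntry_nonneg hK t _ _
  have hstep : ∀ z, H z = K z y.1 + ∑ z', (if z' ∈ A then 0 else K z z') * H z' := by
    intro z
    simp only [hH]
    rw [(hsum z).tsum_eq_zero_add, firstEntry_zero]
    congr 1
    simp only [firstEntry_succ]
    rw [Summable.tsum_finsetSum fun z' _ => (hsum z').mul_left _]
    simp only [tsum_mul_left]
  have hge : ∀ z, K z y.1 + K z w * H w ≤ H z := by
    intro z
    have h1 := single_le_sum (f := fun z' => (if z' ∈ A then 0 else K z z') * H z')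
      (fun z' _ => by
        refine mul_nonneg ?_ (hH0 z')
        split_ifs
        · exact le_rfl
        · exact hK _ _) (mem_univ w)
    simp only [hw, if_false] at h1
    rw [hstep z]
    linarith
  have hx := hge x.1
  have hww := hge w
  have hle : K w w ≤ 1 := by
    rw [← hK1 w]
    exact single_le_sum (f := fun z => K w z) (fun z _ => hK _ _) (mem_univ w)
  have hQ : traceKernel K A x y = H x.1 := rfl
  rw [hQ]
  have a1 : K x.1 w * H w ≤ H x.1 := by linarith [hK x.1 y.1]
  have a2 : K w y.1 ≤ (1 - K w w) * H w := by linarith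
  calc K x.1 w * K w y.1 ≤ K x.1 w * ((1 - K w w) * H w) :=
        mul_le_mul_of_nonneg_left a2 (hK _ _)
    _ = (1 - K w w) * (K x.1 w * H w) := by ring
    _ ≤ (1 - K w w) * H x.1 := mul_le_mul_of_nonneg_left a1 (by linarith)

end Trace

/-! ### Mixing of lazy reversible chains from a Poincaré inequality -/

section Mixing

variable {S : Type*} [Fintype S] {Q : S → S → ℝ} {π : S → ℝ}

/-- The action of a kernel on functions. -/
def kernelAct (Q : S → S → ℝ) (h : S → ℝ) : S → ℝ := fun y => ∑ z, Q y z * h z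

lemma varForm_eq (hπ1 : ∑ x, π x = 1) (h : S → ℝ) :
    varForm π h = ∑ x, π x * h x ^ 2 - (∑ x, π x * h x) ^ 2 := by
  have key : ∀ x y, |h x - h y| ^ 2 * π x * π y
      = (π x * h x ^ 2) * π y + π x * (π y * h y ^ 2) - 2 * ((π x * h x) * (π y * h y)) := by
    intro x y
    rw [sq_abs]; ring
  simp only [varForm, key, sum_sub_distrib, sum_add_distrib, ← mul_sum, ← sum_mul, hπ1]
  ring

/-- Symmetrization: `⟨h - Qh, h⟩` is the Dirichlet form. -/
lemma dirichletForm_eq (hQ1 : ∀ x, ∑ y, Q x y = 1) (hrev : ∀ x y, π x * Q x y = π y * Q y x)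
    (h : S → ℝ) :
    dirichletForm Q π h = ∑ y, π y * h y ^ 2 - ∑ y, π y * h y * kernelAct Q h y := by
  have key : ∀ x y, |h x - h y| ^ 2 * Q x y * π x
      = (π x * h x ^ 2) * Q x y + (π y * h y ^ 2) * Q y x
        - 2 * ((π x * h x) * (Q x y * h y)) := by
    intro x y
    rw [sq_abs]
    linear_combination (h y ^ 2) * hrev x y
  have e1 : ∑ x, ∑ y, (π x * h x ^ 2) * Q x y = ∑ x, π x * h x ^ 2 := by
    simp only [← mul_sum, hQ1, mul_one]
  have e2 : ∑ x, ∑ y, (π y * h y ^ 2) * Q y x = ∑ x, π x * h x ^ 2 := by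
    rw [sum_comm, e1]
  simp only [dirichletForm, key, sum_sub_distrib, sum_add_distrib, e2, ← mul_sum, hQ1, mul_one,
    kernelAct]
  ring

/-- For a kernel holding with probability at least `1/2`, one step decreases the second moment by
at least the Dirichlet form `E`. With `g = h - Qh` the decrease is `2⟨g, h⟩ - ‖g‖² = 2E - ‖g‖²`,
and `‖g‖² ≤ E` by Cauchy–Schwarz since `g` only sees the off-diagonal mass. -/
lemma sq_decrease (hQ : ∀ x y, 0 ≤ Q x y) (hQ1 : ∀ x, ∑ y, Q x y = 1) (hπ : ∀ x, 0 ≤ π x)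
    (hrev : ∀ x y, π x * Q x y = π y * Q y x) (hlazy : ∀ x, 1 / 2 ≤ Q x x) (h : S → ℝ) :
    dirichletForm Q π h ≤ ∑ y, π y * h y ^ 2 - ∑ y, π y * kernelAct Q h y ^ 2 := by
  have hg : ∀ y, (h y - kernelAct Q h y) ^ 2 ≤ 1 / 2 * ∑ z, Q y z * (h y - h z) ^ 2 := by
    intro y
    have e : h y - kernelAct Q h y = ∑ z ∈ univ.erase y, Q y z * (h y - h z) := by
      have e0 : h y - kernelAct Q h y = ∑ z, Q y z * (h y - h z) := by
        simp only [kernelAct, mul_sub, sum_sub_distrib, ← sum_mul, hQ1, one_mul]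
      rw [e0, ← add_sum_erase _ _ (mem_univ y)]
      simp
    have hmass : ∑ z ∈ univ.erase y, Q y z ≤ 1 / 2 := by
      have := add_sum_erase univ (fun z => Q y z) (mem_univ y)
      simp only [hQ1] at this
      linarith [hlazy y]
    have hsub : ∑ z ∈ univ.erase y, Q y z * (h y - h z) ^ 2 ≤ ∑ z, Q y z * (h y - h z) ^ 2 :=
      sum_le_sum_of_subset_of_nonneg (erase_subset _ _)
        fun z _ _ => mul_nonneg (hQ _ _) (sq_nonneg _)
    have hnn : 0 ≤ ∑ z ∈ univ.erase y, Q y z * (h y - h z) ^ 2 :=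
      sum_nonneg fun z _ => mul_nonneg (hQ _ _) (sq_nonneg _)
    rw [e]
    calc (∑ z ∈ univ.erase y, Q y z * (h y - h z)) ^ 2
        ≤ (∑ z ∈ univ.erase y, Q y z) * ∑ z ∈ univ.erase y, Q y z * (h y - h z) ^ 2 :=
          sum_sq_le_sum_mul_sum_of_sq_le_mul _ (fun z _ => hQ _ _)
            (fun z _ => mul_nonneg (hQ _ _) (sq_nonneg _)) (fun z _ => le_of_eq (by ring))
      _ ≤ 1 / 2 * ∑ z ∈ univ.erase y, Q y z * (h y - h z) ^ 2 :=
          mul_le_mul_of_nonneg_right hmass hnn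
      _ ≤ _ := by linarith
  have hg2 : ∑ y, π y * (h y - kernelAct Q h y) ^ 2 ≤ dirichletForm Q π h := by
    calc ∑ y, π y * (h y - kernelAct Q h y) ^ 2
        ≤ ∑ y, π y * (1 / 2 * ∑ z, Q y z * (h y - h z) ^ 2) :=
          sum_le_sum fun y _ => mul_le_mul_of_nonneg_left (hg y) (hπ y)
      _ = dirichletForm Q π h := by
          simp only [dirichletForm, mul_sum]
          refine sum_congr rfl fun y _ => sum_congr rfl fun z _ => ?_
          rw [sq_abs]; ring
  have hE := dirichletForm_eq hQ1 hrev h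
  have hexp : ∑ y, π y * (h y - kernelAct Q h y) ^ 2
      = ∑ y, π y * h y ^ 2 - 2 * ∑ y, π y * h y * kernelAct Q h y
        + ∑ y, π y * kernelAct Q h y ^ 2 := by
    rw [mul_sum, ← sum_sub_distrib, ← sum_add_distrib]
    exact sum_congr rfl fun y _ => by ring
  linarith

/-- Density with respect to `π` of the law after `t` steps from `x`. -/
def density (Q : S → S → ℝ) (π : S → ℝ) (x : S) (t : ℕ) : S → ℝ :=
  fun y => iterDist Q (delta x) t y / π y

lemma density_succ (hpos : ∀ x, 0 < π x) (hrev : ∀ x y, π x * Q x y = π y * Q y x) (x : S)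
    (t : ℕ) : density Q π x (t + 1) = kernelAct Q (density Q π x t) := by
  funext y
  simp only [density, iterDist, evolve, kernelAct, sum_div]
  refine sum_congr rfl fun z _ => ?_
  have h1 := (hpos y).ne'
  have h2 := (hpos z).ne'
  have h3 := hrev z y
  field_simp
  linear_combination (iterDist Q (delta x) t z) * h3

lemma sum_iterDist (hQ1 : ∀ x, ∑ y, Q x y = 1) (x : S) (t : ℕ) :
    ∑ y, iterDist Q (delta x) t y = 1 := by
  induction t with
  | zero => simp [iterDist, delta]
  | succ t ih =>
    simp only [iterDist, evolve]
    rw [sum_comm]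
    simp only [← mul_sum, hQ1, mul_one, ih]

lemma sum_density (hQ1 : ∀ x, ∑ y, Q x y = 1) (hpos : ∀ x, 0 < π x) (x : S) (t : ℕ) :
    ∑ y, π y * density Q π x t y = 1 := by
  rw [← sum_iterDist hQ1 x t]
  exact sum_congr rfl fun y _ => mul_div_cancel₀ _ (hpos y).ne'

/-- Exponential decay of the `χ²` distance to equilibrium. -/
lemma chiSq_decay (hQ : ∀ x y, 0 ≤ Q x y) (hQ1 : ∀ x, ∑ y, Q x y = 1) (hpos : ∀ x, 0 < π x)
    (hπ1 : ∑ x, π x = 1) (hrev : ∀ x y, π x * Q x y = π y * Q y x)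
    (hlazy : ∀ x, 1 / 2 ≤ Q x x) {γ : ℝ} (hγ1 : γ ≤ 1)
    (hgap : ∀ f, γ * varForm π f ≤ dirichletForm Q π f) (x : S) (t : ℕ) :
    ∑ y, π y * density Q π x t y ^ 2 - 1 ≤ (1 - γ) ^ t * (1 / π x) := by
  induction t with
  | zero =>
    have : ∑ y, π y * density Q π x 0 y ^ 2 = 1 / π x := by
      rw [sum_eq_single x]
      · have := (hpos x).ne'
        simp only [density, iterDist, delta, if_true]
        field_simp
      · intro y _ hy
        simp [density, iterDist, delta, hy]
      · simp
    rw [this]; simp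
  | succ t ih =>
    have h1 := sq_decrease hQ hQ1 (fun x => (hpos x).le) hrev hlazy (density Q π x t)
    have h2 := hgap (density Q π x t)
    rw [varForm_eq hπ1, sum_density hQ1 hpos] at h2
    rw [← density_succ hpos hrev] at h1
    calc ∑ y, π y * density Q π x (t + 1) y ^ 2 - 1
        ≤ (1 - γ) * (∑ y, π y * density Q π x t y ^ 2 - 1) := by linarith
      _ ≤ (1 - γ) * ((1 - γ) ^ t * (1 / π x)) :=
          mul_le_mul_of_nonneg_left ih (by linarith)
      _ = _ := by ring

lemma tvDist_sq_le (hQ1 : ∀ x, ∑ y, Q x y = 1) (hpos : ∀ x, 0 < π x)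
    (hπ1 : ∑ x, π x = 1) (x : S) (t : ℕ) :
    (2 * tvDist (iterDist Q (delta x) t) π) ^ 2 ≤ ∑ y, π y * density Q π x t y ^ 2 - 1 := by
  have e1 : 2 * tvDist (iterDist Q (delta x) t) π = ∑ y, π y * |density Q π x t y - 1| := by
    simp only [tvDist]
    rw [← mul_assoc]
    norm_num
    refine sum_congr rfl fun y _ => ?_
    rw [← abs_of_pos (hpos y), ← abs_mul, abs_of_pos (hpos y), mul_sub, mul_one, density,
      mul_div_cancel₀ _ (hpos y).ne']
  have e2 : ∑ y, π y * (density Q π x t y - 1) ^ 2 = ∑ y, π y * density Q π x t y ^ 2 - 1 := by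
    have h0 := sum_density hQ1 hpos x t
    have : ∀ y, π y * (density Q π x t y - 1) ^ 2
        = π y * density Q π x t y ^ 2 - 2 * (π y * density Q π x t y) + π y := fun y => by ring
    simp only [this, sum_add_distrib, sum_sub_distrib, ← mul_sum, h0, hπ1]
    ring
  rw [e1, ← e2]
  calc (∑ y, π y * |density Q π x t y - 1|) ^ 2
      ≤ (∑ y, π y) * ∑ y, π y * (density Q π x t y - 1) ^ 2 :=
        sum_sq_le_sum_mul_sum_of_sq_le_mul _ (fun y _ => (hpos y).le)
          (fun y _ => mul_nonneg (hpos y).le (sq_nonneg _))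
          (fun y _ => le_of_eq (by rw [mul_pow, sq_abs]; ring))
    _ = _ := by rw [hπ1, one_mul]

/-- The standard `L²` bound on the mixing time. -/
lemma mixingTime_le (hQ : ∀ x y, 0 ≤ Q x y) (hQ1 : ∀ x, ∑ y, Q x y = 1) (hpos : ∀ x, 0 < π x)
    (hπ1 : ∑ x, π x = 1) (hrev : ∀ x y, π x * Q x y = π y * Q y x)
    (hlazy : ∀ x, 1 / 2 ≤ Q x x) {γ : ℝ} (hγ : 0 < γ) (hγ1 : γ ≤ 1)
    (hgap : ∀ f, γ * varForm π f ≤ dirichletForm Q π f) {B : ℝ} (hB1 : 1 ≤ B)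
    (hB : ∀ x, 1 / π x ≤ B) :
    (mixingTime Q π : ℝ) ≤ Real.log (8 * B) / γ + 1 := by
  have hlog : 0 < Real.log (8 * B) := Real.log_pos (by linarith)
  set t := ⌈Real.log (8 * B) / γ⌉₊ with ht
  have ht0 : 0 < t := Nat.ceil_pos.mpr (div_pos hlog hγ)
  have htle : (t : ℝ) ≤ Real.log (8 * B) / γ + 1 := (Nat.ceil_lt_add_one (div_pos hlog hγ).le).le
  have htge : Real.log (8 * B) ≤ γ * t := by
    have := Nat.le_ceil (Real.log (8 * B) / γ)
    rw [div_le_iff₀ hγ] at this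
    linarith
  refine le_trans ?_ htle
  have hmem : t ∈ {t : ℕ | 0 < t ∧ ∀ x : S, tvDist (iterDist Q (delta x) t) π < 1 / 4} := by
    refine ⟨ht0, fun x => ?_⟩
    have h1 := (tvDist_sq_le hQ1 hpos hπ1 x t).trans
      (chiSq_decay hQ hQ1 hpos hπ1 hrev hlazy hγ1 hgap x t)
    have h2 : (1 - γ) ^ t * (1 / π x) ≤ 1 / 8 := by
      have h3 : (1 - γ) ^ t ≤ Real.exp (-(γ * t)) := by
        have h4 : 1 - γ ≤ Real.exp (-γ) := by linarith [Real.add_one_le_exp (-γ)]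
        calc (1 - γ) ^ t ≤ Real.exp (-γ) ^ t := pow_le_pow_left₀ (by linarith) h4 t
          _ = Real.exp (-(γ * t)) := by rw [← Real.exp_nat_mul]; ring_nf
      have h5 : Real.exp (-(γ * t)) ≤ 1 / (8 * B) := by
        calc Real.exp (-(γ * t)) ≤ Real.exp (-Real.log (8 * B)) :=
              Real.exp_le_exp.mpr (by linarith)
          _ = 1 / (8 * B) := by
              rw [Real.exp_neg, Real.exp_log (by linarith), one_div]
      calc (1 - γ) ^ t * (1 / π x) ≤ 1 / (8 * B) * B :=
            mul_le_mul (h3.trans h5) (hB x) (by have := hpos x; positivity) (by positivity)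
        _ = 1 / 8 := by field_simp
    nlinarith
  exact_mod_cast Nat.sInf_le hmem

lemma one_div_spectralGap_le {γ : ℝ} (hγ : 0 < γ) (hvar : ∀ f, 0 ≤ varForm π f)
    (hgap : ∀ f, γ * varForm π f ≤ dirichletForm Q π f) :
    1 / spectralGap Q π ≤ 1 / γ := by
  unfold spectralGap
  set R := {r : ℝ | ∃ f : S → ℝ, varForm π f ≠ 0 ∧ r = dirichletForm Q π f / varForm π f}
  rcases Set.eq_empty_or_nonempty R with h | h
  · rw [h, Real.sInf_empty]
    simp [hγ.le]
  · refine one_div_le_one_div_of_le hγ (le_csInf h ?_)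
    rintro r ⟨f, hf, rfl⟩
    rw [le_div_iff₀ (lt_of_le_of_ne (hvar f) (Ne.symm hf))]
    exact hgap f

end Mixing

/-! ### The KCIP kernel -/

section Kernel

lemma adj_symm {L : ℕ} {u v : Vertex L} (h : adj u v) : adj v u := by
  rcases h with h | h | h | h
  · exact Or.inr (Or.inr (Or.inl h))
  · exact Or.inr (Or.inr (Or.inr h))
  · exact Or.inl h
  · exact Or.inr (Or.inl h)

lemma not_adj_self {L : ℕ} (hL : 2 ≤ L) (v : Vertex L) : ¬ adj v v := by
  have : Fact (1 < L) := ⟨hL⟩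
  simp [adj, Prod.ext_iff]

variable {L : ℕ} [NeZero L] {p : ℝ}

/-- The contribution of the choice `v_t = v` to the transition probability. -/
def siteTerm (p : ℝ) (x y : Config L) (v : Vertex L) : ℝ :=
  if hasOccNbr x v then
    p * (if y = Function.update x v true then 1 else 0)
      + (1 - p) * (if y = Function.update x v false then 1 else 0)
  else (if y = x then 1 else 0)

lemma kcipKernel_eq (x y : Config L) :
    kcipKernel L p x y = (1 / (L : ℝ) ^ 2) * ∑ v, siteTerm p x y v := rfl

lemma siteTerm_nonneg (hp : 0 ≤ p) (hp1 : p ≤ 1) (x y : Config L) (v : Vertex L) :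
    0 ≤ siteTerm p x y v := by
  have : 0 ≤ 1 - p := by linarith
  unfold siteTerm
  split_ifs <;> simp <;> linarith

lemma kcipKernel_nonneg (hp : 0 ≤ p) (hp1 : p ≤ 1) (x y : Config L) :
    0 ≤ kcipKernel L p x y := by
  rw [kcipKernel_eq]
  exact mul_nonneg (by positivity) (sum_nonneg fun v _ => siteTerm_nonneg hp hp1 x y v)

lemma card_vertex : (Fintype.card (Vertex L) : ℝ) = (L : ℝ) ^ 2 := by
  simp [Vertex, ZMod.card, sq]

lemma sq_ne_zero' : ((L : ℝ) ^ 2) ≠ 0 := by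
  have : (L : ℝ) ≠ 0 := Nat.cast_ne_zero.mpr (NeZero.ne L)
  positivity

lemma kcipKernel_sum (x : Config L) : ∑ y, kcipKernel L p x y = 1 := by
  have h : ∀ v, ∑ y, siteTerm p x y v = 1 := by
    intro v
    unfold siteTerm
    split_ifs
    · rw [sum_add_distrib, ← mul_sum, ← mul_sum]
      simp
    · simp
  simp only [kcipKernel_eq, ← mul_sum]
  rw [sum_comm]
  simp only [h, sum_const, nsmul_eq_mul, mul_one]
  rw [card_univ, card_vertex]
  exact one_div_mul_cancel sq_ne_zero'

lemma hasOccNbr_update (hL : 2 ≤ L) (x : Config L) (v : Vertex L) (b : Bool) :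
    hasOccNbr (Function.update x v b) v ↔ hasOccNbr x v := by
  unfold hasOccNbr
  refine exists_congr fun u => and_congr_right fun hu => ?_
  have : u ≠ v := by
    rintro rfl
    exact not_adj_self hL u hu
  rw [Function.update_of_ne this]

lemma numParticles_le (x : Config L) : numParticles x ≤ L ^ 2 := by
  unfold numParticles
  refine (card_filter_le _ _).trans (le_of_eq ?_)
  simp [Vertex, ZMod.card, sq]

lemma numParticles_update (x : Config L) (v : Vertex L) (hv : x v = false) :
    numParticles (Function.update x v true) = numParticles x + 1 := by
  unfold numParticles
  have : (univ.filter fun u => Function.update x v true u = true)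
      = insert v (univ.filter fun u => x u = true) := by
    ext u
    by_cases h : u = v
    · subst h; simp
    · simp [h]
  rw [this, card_insert_of_notMem (by simp [hv])]

lemma numParticles_pos {x : Config L} {v : Vertex L} (h : hasOccNbr x v) :
    0 < numParticles x := by
  obtain ⟨u, _, hu⟩ := h
  exact card_pos.mpr ⟨u, by simp [hu]⟩

/-- Adding a particle at a constrained site is balanced by removing it. -/
lemma stationary_update (x : Config L) (v : Vertex L) (hv : x v = false)
    (h : hasOccNbr x v) :
    kcipStationary L p x * p = kcipStationary L p (Function.update x v true) * (1 - p) := by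
  have h0 := numParticles_pos h
  have h1 := numParticles_update x v hv
  have h2 := numParticles_le (Function.update x v true)
  unfold kcipStationary
  rw [if_pos h0, if_pos (by omega), h1]
  rw [h1] at h2
  obtain ⟨m, hm⟩ := Nat.exists_eq_add_of_le h2
  rw [show L ^ 2 - numParticles x = m + 1 by omega,
    show L ^ 2 - (numParticles x + 1) = m by omega]
  ring

lemma kcip_reversible (hL : 2 ≤ L) (x y : Config L) :
    kcipStationary L p x * kcipKernel L p x y = kcipStationary L p y * kcipKernel L p y x := by
  by_cases hxy : x = y
  · rw [hxy]
  simp only [kcipKernel_eq]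
  rw [mul_left_comm, mul_left_comm (kcipStationary L p y)]
  congr 1
  rw [mul_sum, mul_sum]
  refine sum_congr rfl fun v _ => ?_
  -- Only an update at `v` can connect `x` to `y`; compare the two values at `v`.
  by_cases hy : y = Function.update x v (y v)
  · have hc : hasOccNbr y v ↔ hasOccNbr x v := by
      rw [hy]; exact hasOccNbr_update hL x v _
    have hx : x = Function.update y v (x v) := by
      rw [hy]; simp
    by_cases ho : hasOccNbr x v
    · have ho' := hc.mpr ho
      have hne : x v ≠ y v := by
        intro h
        apply hxy
        rw [hy, ← h]; simp
      have key : ∀ a b : Config L, hasOccNbr a v → a v = false → b = Function.update a v true →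
          kcipStationary L p a * siteTerm p a b v = kcipStationary L p b * siteTerm p b a v := by
        intro a b ha hav hb
        have hb' : hasOccNbr b v := by rw [hb]; exact (hasOccNbr_update hL a v _).mpr ha
        have hne2 : ¬ a = Function.update a v true := by
          intro h
          have := congrFun h v
          simp [hav] at this
        have heq : a = Function.update a v false := by rw [← hav]; simp
        have := stationary_update (p := p) a v hav ha
        unfold siteTerm
        rw [if_pos ha, if_pos hb', hb]
        simp only [Function.update_idem, if_true, Ne.symm hne2, if_false, hne2, ← heq]
        linarith
      cases hxv : x v with
      | false =>
        have : y v = true := by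
          cases h : y v with
          | false => exact absurd (hxv.trans h.symm) hne
          | true => rfl
        rw [this] at hy
        exact key x y ho hxv hy
      | true =>
        have : y v = false := by
          cases h : y v with
          | true => exact absurd (hxv.trans h.symm) hne
          | false => rfl
        rw [hxv] at hx
        exact (key y x ho' this hx).symm
    · have ho' : ¬ hasOccNbr y v := fun h => ho (hc.mp h)
      simp [siteTerm, ho, ho', hxy, Ne.symm hxy]
  · have hx : ∀ b, ¬ x = Function.update y v b := by
      intro b h
      apply hy
      rw [h]; simp
    have hy' : ∀ b, ¬ y = Function.update x v b := by
      intro b h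
      apply hy
      rw [h]; simp
    have hyx : ¬ y = x := fun h => hxy h.symm
    simp only [siteTerm, hx, hy', hxy, hyx, if_false]
    simp

lemma kcipStationary_nonneg (hp : 0 ≤ p) (hp1 : p ≤ 1) (x : Config L) :
    0 ≤ kcipStationary L p x := by
  have h1 : 0 ≤ 1 - p := by linarith
  have h2 : (1 - p) ^ (L ^ 2) ≤ 1 := pow_le_one₀ h1 (by linarith)
  unfold kcipStationary
  split_ifs
  · exact div_nonneg (by positivity) (by linarith)
  · exact le_rfl

lemma kcip_stationary (hL : 2 ≤ L) (y : Config L) :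
    ∑ x, kcipStationary L p x * kcipKernel L p x y = kcipStationary L p y := by
  simp only [fun x => kcip_reversible (p := p) hL x y, ← mul_sum, kcipKernel_sum, mul_one]

/-- Weight common to all configurations with `k` particles. -/
def levelWeight (L k : ℕ) (p : ℝ) : ℝ :=
  p ^ k * (1 - p) ^ (L ^ 2 - k) / (1 - (1 - p) ^ (L ^ 2))

lemma kcipStationary_omega {k : ℕ} (hk : 1 ≤ k) (x : OmegaType L k) :
    kcipStationary L p x.1 = levelWeight L k p := by
  unfold kcipStationary levelWeight
  have h : numParticles x.1 = k := x.2.1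
  rw [h, if_pos (show 0 < k from hk)]

lemma levelWeight_pos (hp : 0 < p) (hp1 : p < 1) (k : ℕ) : 0 < levelWeight L k p := by
  have h1 : 0 < 1 - p := by linarith
  have h2 : (1 - p) ^ (L ^ 2) < 1 :=
    pow_lt_one₀ h1.le (by linarith) (pow_ne_zero _ (NeZero.ne L))
  unfold levelWeight
  exact div_pos (by positivity) (by linarith)

lemma condDist_omega (hp : 0 < p) (hp1 : p < 1) {k : ℕ} (hk : 1 ≤ k) (x : OmegaType L k) :
    condDist (kcipStationary L p) (OmegaSet L k) x = 1 / (Fintype.card (OmegaType L k) : ℝ) := by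
  unfold condDist
  have h := levelWeight_pos (L := L) hp hp1 k
  rw [kcipStationary_omega hk x, sum_congr rfl fun y _ => kcipStationary_omega (p := p) hk y]
  rw [sum_const, card_univ, nsmul_eq_mul]
  have : Nonempty (OmegaType L k) := ⟨x⟩
  have : (Fintype.card (OmegaType L k) : ℝ) ≠ 0 := Nat.cast_ne_zero.mpr Fintype.card_ne_zero
  field_simp

/-- At an empty or unconstrained site the chain holds with probability at least `1 - p`. -/
lemma siteTerm_self_ge (hp : 0 ≤ p) (x : Config L) (v : Vertex L)
    (h : x v = true → ¬ hasOccNbr x v) : 1 - p ≤ siteTerm p x x v := by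
  by_cases h1 : hasOccNbr x v
  · have hv : x v = false := by
      cases hv : x v with
      | true => exact absurd h1 (h hv)
      | false => rfl
    have hx : x = Function.update x v false := by rw [← hv]; simp
    unfold siteTerm
    rw [if_pos h1, if_pos hx]
    split_ifs <;> linarith
  · unfold siteTerm
    rw [if_neg h1, if_pos rfl]
    linarith

lemma kcipKernel_self_omega (hp : 0 ≤ p) {k : ℕ} (x : OmegaType L k) :
    1 - p ≤ kcipKernel L p x.1 x.1 := by
  have h : ∀ v, 1 - p ≤ siteTerm p x.1 x.1 v := by
    intro v
    refine siteTerm_self_ge hp x.1 v ?_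
    rintro hv ⟨u, hu, hxu⟩
    exact x.2.2 u v hu ⟨hxu, hv⟩
  have h2 : ∑ _v : Vertex L, (1 - p) ≤ ∑ v, siteTerm p x.1 x.1 v := sum_le_sum fun v _ => h v
  rw [sum_const, card_univ, nsmul_eq_mul, card_vertex] at h2
  rw [kcipKernel_eq]
  calc 1 - p = 1 / (L : ℝ) ^ 2 * ((L : ℝ) ^ 2 * (1 - p)) := by
        rw [← mul_assoc, one_div_mul_cancel sq_ne_zero', one_mul]
    _ ≤ _ := mul_le_mul_of_nonneg_left h2 (by positivity)

/-- Moving a particle from `u` to the neighbouring site `v` through the configuration `w` with both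
sites occupied. The birth at `v` has probability `p / n`; from `w` the chain leaves with probability
at most `(2 + c) / n`, and the death at `u` alone has probability at least `1 / (2 n)`, so the
excursion ends at `y` with probability bounded below in terms of `c`. -/
lemma traceKernel_move_ge (hL : 2 ≤ L) {c : ℝ} (hc : 0 < c) (hcL : 2 * c ≤ (L : ℝ) ^ 2) {k : ℕ}
    (x y : OmegaType L k) (u v : Vertex L) (huv : adj u v) (hu : x.1 u = true)
    (hv : x.1 v = false)
    (hy : y.1 = Function.update (Function.update x.1 v true) u false) :
    c / (2 * (2 + c)) / ((L : ℝ) ^ 2) ^ 2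
      ≤ traceKernel (kcipKernel L (c / (L : ℝ) ^ 2)) (OmegaSet L k) x y := by
  set n : ℝ := (L : ℝ) ^ 2 with hn
  have hn0 : 0 < n := lt_of_le_of_ne (by positivity) (Ne.symm sq_ne_zero')
  set p := c / n with hp
  have hp0 : 0 < p := div_pos hc hn0
  have hp2 : p ≤ 1 / 2 := by rw [hp, div_le_iff₀ hn0]; linarith
  set w : Config L := Function.update x.1 v true with hw
  have hne : u ≠ v := by rintro rfl; exact not_adj_self hL u huv
  have hwu : w u = true := by rw [hw, Function.update_of_ne hne, hu]
  have hwv : w v = true := by simp [hw]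
  have hyv : y.1 v = true := by rw [hy, Function.update_of_ne hne.symm, hwv]
  have hwA : w ∉ OmegaSet L k := fun h => h.2 u v huv ⟨hwu, hwv⟩
  have hK := kcipKernel_nonneg (L := L) hp0.le (by linarith : p ≤ 1)
  have key := traceKernel_ge_excursion hK kcipKernel_sum x y w hwA
  have hxw : p / n ≤ kcipKernel L p x.1 w := by
    have h1 : p ≤ siteTerm p x.1 w v := by
      unfold siteTerm
      rw [if_pos ⟨u, huv, hu⟩, if_pos hw]
      split_ifs <;> linarith
    have h2 := h1.trans (single_le_sum (f := fun v => siteTerm p x.1 w v)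
      (fun v _ => siteTerm_nonneg hp0.le (by linarith) x.1 w v) (mem_univ v))
    rw [kcipKernel_eq, ← hn, one_div, inv_mul_eq_div]
    gcongr
  have hwy : 1 / 2 / n ≤ kcipKernel L p w y.1 := by
    have h1 : 1 / 2 ≤ siteTerm p w y.1 u := by
      unfold siteTerm
      rw [if_pos ⟨v, adj_symm huv, hwv⟩, if_pos hy]
      split_ifs <;> linarith
    have h2 := h1.trans (single_le_sum (f := fun v => siteTerm p w y.1 v)
      (fun v _ => siteTerm_nonneg hp0.le (by linarith) w y.1 v) (mem_univ u))
    rw [kcipKernel_eq, ← hn, one_div n, inv_mul_eq_div]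
    gcongr
  -- In `w` the only occupied sites with an occupied neighbour are `u` and `v`.
  have hww : 1 - kcipKernel L p w w ≤ (2 + c) / n := by
    have h1 : ∀ z, (1 - p) - (if z = u then 1 else 0) - (if z = v then 1 else 0)
        ≤ siteTerm p w w z := by
      intro z
      by_cases hzu : z = u
      · have := siteTerm_nonneg hp0.le (by linarith : p ≤ 1) w w z
        rw [if_pos hzu]
        split_ifs <;> linarith
      by_cases hzv : z = v
      · have := siteTerm_nonneg hp0.le (by linarith : p ≤ 1) w w z
        rw [if_pos hzv]
        split_ifs <;> linarith
      rw [if_neg hzu, if_neg hzv, sub_zero, sub_zero]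
      refine siteTerm_self_ge hp0.le w z ?_
      rintro hz ⟨s, hs, hws⟩
      have hxz : x.1 z = true := by rwa [hw, Function.update_of_ne hzv] at hz
      by_cases hsv : s = v
      · subst hsv
        refine y.2.2 s z hs ⟨hyv, ?_⟩
        rw [hy, Function.update_of_ne hzu, hz]
      · refine x.2.2 s z hs ⟨?_, hxz⟩
        rwa [hw, Function.update_of_ne hsv] at hws
    have h2 := sum_le_sum fun z (_ : z ∈ (univ : Finset (Vertex L))) => h1 z
    simp only [sum_sub_distrib, sum_const, card_univ, nsmul_eq_mul, mul_one, sum_ite_eq', mem_univ,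
      if_true] at h2
    rw [card_vertex, ← hn] at h2
    rw [kcipKernel_eq, ← hn, one_div n, inv_mul_eq_div, sub_le_iff_le_add, ← add_div,
      le_div_iff₀ hn0]
    have : n * p = c := by rw [hp]; field_simp
    nlinarith
  have hQ := traceKernel_nonneg (A := OmegaSet L k) hK x y
  have h1 : p / n * (1 / 2 / n) ≤ (2 + c) / n * traceKernel (kcipKernel L p) (OmegaSet L k) x y :=
    calc p / n * (1 / 2 / n) ≤ kcipKernel L p x.1 w * kcipKernel L p w y.1 :=
          mul_le_mul hxw hwy (by positivity) (hK _ _)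
      _ ≤ _ := key
      _ ≤ _ := mul_le_mul_of_nonneg_right hww hQ
  have h2 : p / n * (1 / 2 / n) = (2 + c) / n * (c / (2 * (2 + c)) / n ^ 2) := by
    rw [hp]; field_simp
  rw [h2] at h1
  exact le_of_mul_le_mul_left h1 (by positivity)

end Kernel

/-! ### Labelled configurations and their Dirichlet energy -/

section Labelled

/-- Labelled configurations of `k` particles (collisions allowed). -/
abbrev LConf (L k : ℕ) := Fin k → Vertex L

/-- The displacement `(c, 0)` for `d = true` (horizontal) or `(0, c)` for `d = false`. -/
def dir {L : ℕ} (d : Bool) (c : ZMod L) : Vertex L := if d then (c, 0) else (0, c)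

/-- The coordinate of a vertex in direction `d`. -/
def co {L : ℕ} (d : Bool) (v : Vertex L) : ZMod L := if d then v.1 else v.2

/-- The particles sit at distinct, pairwise non-adjacent sites. -/
def valid {L k : ℕ} (X : LConf L k) : Prop := ∀ i j, i ≠ j → X i ≠ X j ∧ ¬ adj (X i) (X j)

/-- `a` and `b` are at cyclic distance at least `2`. -/
def far {L : ℕ} (a b : ZMod L) : Prop := a - b ≠ 0 ∧ a - b ≠ 1 ∧ b - a ≠ 1

lemma far_symm {L : ℕ} {a b : ZMod L} (h : far a b) : far b a := by
  refine ⟨fun h0 => h.1 ?_, h.2.2, h.2.1⟩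
  rw [← neg_sub, h0, neg_zero]

/-- Sites whose coordinates in some direction are far are distinct and non-adjacent. -/
lemma far.sep {L : ℕ} {u v : Vertex L} {d : Bool} (h : far (co d u) (co d v)) :
    u ≠ v ∧ ¬ adj u v := by
  obtain ⟨h0, h1, h2⟩ := h
  have h0' : co d v - co d u ≠ 0 := by rwa [← neg_sub, neg_ne_zero]
  refine ⟨?_, ?_⟩
  · rintro rfl
    exact h0 (sub_self _)
  · rintro (h | h | h | h) <;> cases d <;> simp [Prod.ext_iff, co] at * <;> simp_all

lemma sep_symm {L : ℕ} {u v : Vertex L} (h : u ≠ v ∧ ¬ adj u v) : v ≠ u ∧ ¬ adj v u :=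
  ⟨h.1.symm, fun h' => h.2 (adj_symm h')⟩

variable {L k : ℕ} [NeZero L]

/-- Move particle `i` of `W` by `c` in direction `d`. -/
def shift (W : LConf L k) (i : Fin k) (d : Bool) (c : ZMod L) : LConf L k :=
  W + Pi.single i (dir d c)

lemma shift_self (W : LConf L k) (i : Fin k) (d : Bool) (c : ZMod L) :
    shift W i d c i = W i + dir d c := by
  simp [shift]

lemma shift_of_ne (W : LConf L k) {i j : Fin k} (hj : j ≠ i) (d : Bool) (c : ZMod L) :
    shift W i d c j = W j := by
  simp [shift, Pi.single_eq_of_ne hj]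

/-- Squared increment of `F` along the move of particle `i` by one step in direction `d`,
provided the configurations before and after are valid. -/
def edgeSq (F : LConf L k → ℝ) (i : Fin k) (d : Bool) (W : LConf L k) : ℝ :=
  if valid W ∧ valid (shift W i d 1) then
    (F W - F (shift W i d 1)) ^ 2 else 0

/-- Unnormalized Dirichlet energy of the labelled exclusion dynamics on valid configurations. -/
def energy (F : LConf L k → ℝ) : ℝ := ∑ d, ∑ i, ∑ W, edgeSq F i d W

lemma edgeSq_nonneg (F : LConf L k → ℝ) (i : Fin k) (d : Bool) (W : LConf L k) :
    0 ≤ edgeSq F i d W := by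
  unfold edgeSq
  split_ifs <;> positivity

lemma energy_nonneg (F : LConf L k → ℝ) : 0 ≤ energy F :=
  sum_nonneg fun _ _ => sum_nonneg fun _ _ => sum_nonneg fun _ _ => edgeSq_nonneg _ _ _ _

lemma dir_add (d : Bool) (a b : ZMod L) : dir d (a + b) = dir d a + dir d b := by
  cases d <;> simp [dir]

lemma card_lconf : (Fintype.card (LConf L k) : ℝ) = ((L : ℝ) ^ 2) ^ k := by
  rw [Fintype.card_fun, Fintype.card_fin, Nat.cast_pow, card_vertex]

/-- Poincaré-type bound on the discrete circle. -/
lemma cyclic_bound (g : ZMod L → ℝ) (a b : ZMod L) :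
    (g a - g b) ^ 2 ≤ L * ∑ c, (g c - g (c + 1)) ^ 2 := by
  set m := (b - a).val with hm
  have hmL : m < L := ZMod.val_lt _
  have hb : b = a + (m : ZMod L) := by rw [hm, ZMod.natCast_zmod_val]; ring
  have h1 : g a - g b = ∑ i ∈ range m, (g (a + (i : ZMod L)) - g (a + ((i + 1 : ℕ) : ZMod L))) := by
    rw [sum_range_sub' (fun i : ℕ => g (a + (i : ZMod L)))]
    rw [hb]; simp
  have h2 : ∑ i ∈ range m, (g (a + (i : ZMod L)) - g (a + ((i + 1 : ℕ) : ZMod L))) ^ 2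
      ≤ ∑ c, (g c - g (c + 1)) ^ 2 := by
    have hinj : Set.InjOn (fun i : ℕ => a + (i : ZMod L)) (range m) := by
      intro i hi j hj hij
      have hi' : i < L := (mem_range.mp hi).trans hmL
      have hj' : j < L := (mem_range.mp hj).trans hmL
      have := congrArg ZMod.val (add_left_cancel hij)
      rwa [ZMod.val_natCast_of_lt hi', ZMod.val_natCast_of_lt hj'] at this
    calc _ = ∑ i ∈ range m, (fun c => (g c - g (c + 1)) ^ 2) (a + (i : ZMod L)) := by
          refine sum_congr rfl fun i _ => ?_
          simp [add_assoc]
      _ = ∑ c ∈ (range m).image (fun i : ℕ => a + (i : ZMod L)), (g c - g (c + 1)) ^ 2 :=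
          (sum_image (f := fun c => (g c - g (c + 1)) ^ 2) hinj).symm
      _ ≤ _ := sum_le_univ_sum_of_nonneg fun c => by positivity
  have h0 : 0 ≤ ∑ c, (g c - g (c + 1)) ^ 2 := sum_nonneg fun _ _ => by positivity
  rw [h1]
  refine sq_sum_le_card_mul_sum_sq.trans ?_
  rw [card_range]
  have : (m : ℝ) ≤ L := by exact_mod_cast hmL.le
  exact (mul_le_mul_of_nonneg_left h2 (by positivity)).trans (mul_le_mul_of_nonneg_right this h0)

/-- Moving particle `i` along a line all of whose points give valid configurations. -/
lemma line_bound (F : LConf L k → ℝ) (W : LConf L k) (i : Fin k) (d : Bool) (s : ZMod L)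
    (h : ∀ c, valid (shift W i d c)) :
    (F W - F (shift W i d s)) ^ 2
      ≤ L * ∑ c, edgeSq F i d (shift W i d c) := by
  have h1 := cyclic_bound (fun c => F (shift W i d c)) 0 s
  have h0 : shift W i d 0 = W := by cases d <;> simp [shift, dir]
  simp only [h0] at h1
  refine h1.trans (le_of_eq ?_)
  congr 1
  refine sum_congr rfl fun c _ => ?_
  have : shift W i d (c + 1)
      = shift (shift W i d c) i d 1 := by
    simp only [shift]
    rw [dir_add, Pi.single_add, add_assoc]
  unfold edgeSq
  rw [← this, if_pos ⟨h c, h (c + 1)⟩]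

/-! ### Resampling a row-separated configuration -/

/-- No two particles are in the same or in neighbouring rows. -/
def rowSep (X : LConf L k) : Prop := ∀ i j, i ≠ j → far (X i).2 (X j).2

/-- All rows and columns of `Y` are far from each other and from those of `X`. -/
def good (X Y : LConf L k) : Prop :=
  (∀ d i j, i ≠ j → far (co d (Y i)) (co d (Y j))) ∧
    ∀ d i j, far (co d (Y i)) (co d (X j))

lemma rowSep.valid {L k : ℕ} {X : LConf L k} (h : rowSep X) : valid X :=
  fun i j hij => far.sep (d := false) (h i j hij)

lemma good.valid {L k : ℕ} {X Y : LConf L k} (h : good X Y) : valid Y :=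
  fun i j hij => (h.1 true i j hij).sep

/-- The configuration in which particles `0, …, m-1` are taken from `Y`, the others from `X`. -/
def splice (m : ℕ) (X Y : LConf L k) : LConf L k := fun j => if j.1 < m then Y j else X j

/-- Splicing is half of an involution on pairs, so it preserves the counting measure. -/
lemma sum_splice (m : ℕ) (φ : LConf L k → ℝ) :
    ∑ X, ∑ Y, φ (splice m X Y) = ((L : ℝ) ^ 2) ^ k * ∑ W, φ W := by
  have hinv : Function.Involutive
      (fun q : LConf L k × LConf L k => (splice m q.1 q.2, splice m q.2 q.1)) := by
    rintro ⟨X, Y⟩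
    ext j <;> simp only [splice] <;> split_ifs <;> rfl
  calc ∑ X, ∑ Y, φ (splice m X Y)
      = ∑ q : LConf L k × LConf L k, φ (splice m q.1 q.2) :=
        (Fintype.sum_prod_type' fun X Y => φ (splice m X Y)).symm
    _ = ∑ q : LConf L k × LConf L k, φ q.1 := Equiv.sum_comp hinv.toPerm fun q => φ q.1
    _ = ∑ X : LConf L k, ∑ _Y : LConf L k, φ X := Fintype.sum_prod_type' fun X _ => φ X
    _ = _ := by
      simp only [sum_const, card_univ, nsmul_eq_mul, card_lconf, mul_sum]

lemma sum_splice_line (F : LConf L k → ℝ) (m : ℕ) (i : Fin k) (d : Bool) :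
    ∑ X, ∑ Y, ∑ c, edgeSq F i d (shift (splice m X Y) i d c)
      = L * (((L : ℝ) ^ 2) ^ k * ∑ W, edgeSq F i d W) := by
  rw [sum_splice m fun W => ∑ c, edgeSq F i d (shift W i d c)]
  rw [sum_comm, sum_congr rfl fun c _ => show ∑ W, edgeSq F i d (shift W i d c) = ∑ W, edgeSq F i d W from
    Equiv.sum_comp (Equiv.addRight (Pi.single i (dir d c) : LConf L k)) (edgeSq F i d)]
  rw [sum_const, card_univ, ZMod.card, nsmul_eq_mul]
  ring

/-- Replacing the `i`-th particle of `X` by that of `Y`: first along its row, then along its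
new column. -/
lemma splice_step (F : LConf L k → ℝ) {X Y : LConf L k} (hX : rowSep X) (hY : good X Y)
    (i : Fin k) :
    (F (splice i X Y) - F (splice (i + 1) X Y)) ^ 2
      ≤ 2 * L * (∑ c, edgeSq F i true (shift (splice i X Y) i true c)
          + ∑ c, edgeSq F i false (shift (splice (i + 1) X Y) i false c)) := by
  have hs1 : splice i X Y i = X i := by simp [splice]
  have hs2 : splice (i + 1) X Y i = Y i := by simp [splice]
  have hs3 : ∀ j, j ≠ i → splice (i + 1) X Y j = splice i X Y j := by
    intro j hj
    have : j.1 ≠ i.1 := fun h => hj (Fin.ext h)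
    simp only [splice]
    by_cases h : j.1 < i.1
    · rw [if_pos h, if_pos (by omega)]
    · rw [if_neg h, if_neg (by omega)]
  have hfar : ∀ j l : Fin k, j ≠ l → far (co false (splice i X Y j)) (co false (splice i X Y l)) := by
    intro j l hjl
    simp only [splice]
    split_ifs
    · exact hY.1 false j l hjl
    · exact hY.2 false j l
    · exact far_symm (hY.2 false l j)
    · exact hX j l hjl
  have hfar1 : ∀ j : Fin k, j ≠ i → far (co true (Y i)) (co true (splice i X Y j)) := by
    intro j hji
    simp only [splice]
    split_ifs
    · exact hY.1 true i j (Ne.symm hji)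
    · exact hY.2 true i j
  set U : LConf L k := shift (splice i X Y) i true ((Y i).1 - (X i).1) with hU
  have hU2 : U = shift (splice (i + 1) X Y) i false ((X i).2 - (Y i).2) := by
    funext j
    by_cases hj : j = i
    · subst hj
      rw [hU, shift_self, shift_self, hs1, hs2]
      ext <;> simp [dir]
    · rw [hU, shift_of_ne _ hj, shift_of_ne _ hj, hs3 j hj]
  have hrow : ∀ c j, co false (shift (splice i X Y) i true c j)
      = co false (splice i X Y j) := by
    intro c j
    by_cases hj : j = i
    · subst hj; rw [shift_self]; simp [co, dir]
    · rw [shift_of_ne _ hj]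
  have hv1 : ∀ c, valid (shift (splice i X Y) i true c) := by
    intro c j l hjl
    refine far.sep (d := false) ?_
    rw [hrow, hrow]
    exact hfar j l hjl
  have hcol : ∀ c, co true (shift (splice (i + 1) X Y) i false c i)
      = co true (Y i) := by
    intro c
    rw [shift_self, hs2]
    simp [co, dir]
  have hoth : ∀ c j, j ≠ i → shift (splice (i + 1) X Y) i false c j
      = splice i X Y j := by
    intro c j hj
    rw [shift_of_ne _ hj, hs3 j hj]
  have hv2 : ∀ c, valid (shift (splice (i + 1) X Y) i false c) := by
    intro c j l hjl
    by_cases hj : j = i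
    · subst hj
      refine far.sep (d := true) ?_
      rw [hcol, hoth c l (Ne.symm hjl)]
      exact hfar1 l (Ne.symm hjl)
    · by_cases hl : l = i
      · subst hl
        refine far.sep (d := true) ?_
        rw [hcol, hoth c j hj]
        exact far_symm (hfar1 j hj)
      · rw [hoth c j hj, hoth c l hl]
        exact (hfar j l hjl).sep
  have h1 := line_bound F _ i true ((Y i).1 - (X i).1) hv1
  have h2 := line_bound F _ i false ((X i).2 - (Y i).2) hv2
  rw [← hU] at h1
  rw [← hU2] at h2
  nlinarith [sq_nonneg ((F (splice i X Y) - F U) + (F (splice (i + 1) X Y) - F U))]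

/-- Passing from a row-separated configuration to a good one, particle by particle; every
intermediate configuration is a shifted splice, and `sum_splice` bounds how often each edge is used. -/
lemma resample_bound (F : LConf L k → ℝ) :
    ∑ X, ∑ Y, (if rowSep X ∧ good X Y then (F X - F Y) ^ 2 else 0)
      ≤ 2 * k * ((L : ℝ) ^ 2) ^ (k + 1) * energy F := by
  have hpt : ∀ X Y : LConf L k, (if rowSep X ∧ good X Y then (F X - F Y) ^ 2 else 0)
      ≤ k * ∑ i : Fin k, 2 * L *
        (∑ c, edgeSq F i true (shift (splice i X Y) i true c)
          + ∑ c, edgeSq F i false (shift (splice (i + 1) X Y) i false c)) := by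
    intro X Y
    split_ifs with h
    · have h0 : F X - F Y = ∑ i : Fin k, (F (splice i X Y) - F (splice (i + 1) X Y)) := by
        rw [Fin.sum_univ_eq_sum_range
          (fun m => F (splice m X Y) - F (splice (m + 1) X Y)) k]
        rw [sum_range_sub' (fun m => F (splice m X Y))]
        have e0 : splice 0 X Y = X := by funext j; simp [splice]
        have e1 : splice k X Y = Y := by funext j; simp [splice, j.2]
        rw [e0, e1]
      rw [h0]
      refine sq_sum_le_card_mul_sum_sq.trans ?_
      rw [card_univ, Fintype.card_fin]
      exact mul_le_mul_of_nonneg_left (sum_le_sum fun i _ => splice_step F h.1 h.2 i)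
        (by positivity)
    · refine mul_nonneg (by positivity) (sum_nonneg fun i _ => mul_nonneg (by positivity) ?_)
      exact add_nonneg (sum_nonneg fun _ _ => edgeSq_nonneg _ _ _ _)
        (sum_nonneg fun _ _ => edgeSq_nonneg _ _ _ _)
  refine (sum_le_sum fun X _ => sum_le_sum fun Y _ => hpt X Y).trans (le_of_eq ?_)
  have hswap : ∀ G : Fin k → LConf L k → LConf L k → ℝ,
      ∑ X, ∑ Y, (k : ℝ) * ∑ i : Fin k, 2 * L * G i X Y
        = 2 * k * L * ∑ i : Fin k, ∑ X, ∑ Y, G i X Y := by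
    intro G
    simp only [mul_sum]
    rw [sum_congr rfl fun X _ => sum_comm, sum_comm]
    refine sum_congr rfl fun i _ => sum_congr rfl fun X _ => sum_congr rfl fun Y _ => ?_
    ring
  rw [hswap]
  simp only [sum_add_distrib, sum_splice_line]
  unfold energy
  rw [Fintype.sum_bool, ← mul_sum, ← mul_sum, ← mul_sum, ← mul_sum]
  ring

end Labelled

/-! ### Ranks and the stretching schedule -/

section Ranks

variable {k : ℕ}

/-- Strict order on labels by height, ties broken by the label. -/
def below (h : Fin k → ℕ) (l j : Fin k) : Prop := h l < h j ∨ (h l = h j ∧ l < j)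

/-- Rank of a label in the order `below`. -/
def rk (h : Fin k → ℕ) (j : Fin k) : ℕ := (univ.filter fun l => below h l j).card

lemma below_trans {h : Fin k → ℕ} {a b c : Fin k} (h1 : below h a b) (h2 : below h b c) :
    below h a c := by
  unfold below at *
  omega

lemma below_irrefl {h : Fin k → ℕ} (a : Fin k) : ¬ below h a a := by
  unfold below
  omega

lemma below_total {h : Fin k → ℕ} {a b : Fin k} (hab : a ≠ b) : below h a b ∨ below h b a := by
  unfold below
  omega

lemma rk_lt_rk {h : Fin k → ℕ} {a b : Fin k} (hab : below h a b) : rk h a < rk h b := by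
  refine card_lt_card ((ssubset_iff_of_subset ?_).mpr ⟨a, ?_, ?_⟩)
  · intro l hl
    simp only [mem_filter, mem_univ, true_and] at hl ⊢
    exact below_trans hl hab
  · simpa using hab
  · simpa using below_irrefl a

lemma rk_lt (h : Fin k → ℕ) (j : Fin k) : rk h j < k := by
  have : rk h j < (univ : Finset (Fin k)).card := by
    refine card_lt_card ((ssubset_iff_of_subset (filter_subset _ _)).mpr ⟨j, mem_univ _, ?_⟩)
    simpa using below_irrefl j
  simpa using this

/-- Raise of the particle of rank `ρ` after `τ` steps: the particles go up one after the other,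
the topmost first, the particle of rank `ρ` by `2ρ` in total. -/
def lift (k τ ρ : ℕ) : ℕ := min (2 * ρ) (τ - 2 * k * (k - 1 - ρ))

lemma lift_zero {ρ : ℕ} : lift k 0 ρ = 0 := by simp [lift]

lemma lift_le (τ : ℕ) {ρ : ℕ} (hρ : ρ < k) : lift k τ ρ + 2 ≤ 2 * k := by
  unfold lift
  omega

lemma lift_end {ρ : ℕ} (hρ : ρ < k) : lift k (2 * k ^ 2) ρ = 2 * ρ := by
  have h : 2 * k * (k - 1 - ρ) + 2 * k * (ρ + 1) = 2 * k ^ 2 := by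
    obtain ⟨m, rfl⟩ := Nat.exists_eq_add_of_lt hρ
    rw [show ρ + m + 1 - 1 - ρ = m by omega]
    ring
  have h2 : 2 * ρ ≤ 2 * k * (ρ + 1) := by nlinarith
  unfold lift
  omega

lemma lift_slot {ρ ρ' : ℕ} (h : ρ < ρ') (h' : ρ' < k) :
    2 * k * (k - 1 - ρ') + 2 * k ≤ 2 * k * (k - 1 - ρ) := by
  calc 2 * k * (k - 1 - ρ') + 2 * k = 2 * k * (k - 1 - ρ' + 1) := by ring
    _ ≤ _ := Nat.mul_le_mul_left _ (by omega)

lemma lift_full {τ ρ ρ' : ℕ} (h : ρ < ρ') (h' : ρ' < k) (hpos : 0 < lift k τ ρ) :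
    lift k τ ρ' = 2 * ρ' := by
  have := lift_slot h h'
  unfold lift at *
  omega

lemma lift_mono {τ ρ ρ' : ℕ} (h : ρ < ρ') (h' : ρ' < k) : lift k τ ρ ≤ lift k τ ρ' := by
  have := lift_slot h h'
  unfold lift at *
  omega

lemma lift_succ (τ ρ : ℕ) : lift k (τ + 1) ρ = lift k τ ρ ∨ lift k (τ + 1) ρ = lift k τ ρ + 1 := by
  unfold lift
  omega

lemma lift_unique {τ ρ ρ' : ℕ} (h : ρ < ρ') (h' : ρ' < k)
    (hρ : lift k (τ + 1) ρ ≠ lift k τ ρ) : lift k (τ + 1) ρ' = lift k τ ρ' := by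
  have := lift_slot h h'
  unfold lift at *
  omega

/-- Stretching does not change the ranks. -/
lemma rk_stretch (h : Fin k → ℕ) (τ : ℕ) : rk (fun j => h j + lift k τ (rk h j)) = rk h := by
  have key : ∀ a b, below h a b → below (fun j => h j + lift k τ (rk h j)) a b := by
    intro a b hab
    have h1 := lift_mono (τ := τ) (rk_lt_rk hab) (rk_lt h b)
    unfold below at *
    simp only
    omega
  funext j
  unfold rk
  congr 1
  refine filter_congr fun l _ => ⟨fun hl => ?_, key l j⟩
  by_contra hn
  have hlj : l ≠ j := by
    rintro rfl
    exact below_irrefl _ hl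
  have := key j l ((below_total hlj).resolve_left hn)
  exact below_irrefl _ (below_trans hl this)

end Ranks

/-! ### Stretching a configuration until its rows are separated -/

section Stretch

variable {L k : ℕ} [NeZero L]

/-- Height of particle `j` above the cut `β`. -/
def height (β : ZMod L) (X : LConf L k) (j : Fin k) : ℕ := ((X j).2 - β).val

/-- Valid configurations with no particle in the `2k + 2` rows just below the cut `β`. -/
def cutOK (β : ZMod L) (X : LConf L k) : Prop :=
  valid X ∧ ∀ j, height β X j + (2 * k + 2) < L

/-- The configuration after `τ` steps of the stretching schedule. -/
def stretch (β : ZMod L) (τ : ℕ) (X : LConf L k) : LConf L k :=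
  fun j => X j + dir false ((lift k τ (rk (height β X) j) : ℕ) : ZMod L)

lemma stretch_fst (β : ZMod L) (τ : ℕ) (X : LConf L k) (j : Fin k) :
    (stretch β τ X j).1 = (X j).1 := by
  simp [stretch, dir]

lemma stretch_zero (β : ZMod L) (X : LConf L k) : stretch β 0 X = X := by
  funext j
  simp [stretch, lift_zero, dir]

lemma snd_eq_height (β : ZMod L) (X : LConf L k) (j : Fin k) :
    (X j).2 = β + (height β X j : ZMod L) := by
  simp [height]

lemma height_stretch {β : ZMod L} {X : LConf L k} (hX : cutOK β X) (τ : ℕ) (j : Fin k) :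
    height β (stretch β τ X) j = height β X j + lift k τ (rk (height β X) j) := by
  have h1 := hX.2 j
  have h2 := lift_le τ (rk_lt (height β X) j)
  have h3 : (stretch β τ X j).2 - β
      = ((height β X j + lift k τ (rk (height β X) j) : ℕ) : ZMod L) := by
    have := snd_eq_height β X j
    simp only [stretch, dir, Prod.snd_add, Nat.cast_add]
    rw [this]
    simp only [Bool.false_eq_true, if_false]
    ring
  rw [height, h3, ZMod.val_natCast_of_lt (by omega)]

/-- Ranks are preserved, so the displacements, and with them the original configuration, can be
recovered from the stretched one. -/
lemma stretch_injOn (β : ZMod L) (τ : ℕ) :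
    Set.InjOn (stretch β τ) {X : LConf L k | cutOK β X} := by
  intro X hX Y hY hXY
  have hh : ∀ Z : LConf L k, cutOK β Z →
      height β (stretch β τ Z) = fun j => height β Z j + lift k τ (rk (height β Z) j) :=
    fun Z hZ => funext fun j => height_stretch hZ τ j
  have hrk : rk (height β X) = rk (height β Y) := by
    rw [← rk_stretch (height β X) τ, ← rk_stretch (height β Y) τ, ← hh X hX, ← hh Y hY, hXY]
  funext j
  have := congrFun hXY j
  simp only [stretch, hrk] at this
  exact add_right_cancel this

lemma far_of_nat (β : ZMod L) {a b : ℕ} (hab : a + 2 ≤ b) (hb : b + 1 < L) :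
    far (β + (a : ZMod L)) (β + (b : ZMod L)) := by
  have inj : ∀ x y : ℕ, x < L → y < L → (x : ZMod L) = y → x = y := by
    intro x y hx hy h
    have := congrArg ZMod.val h
    rwa [ZMod.val_natCast_of_lt hx, ZMod.val_natCast_of_lt hy] at this
  refine ⟨fun h => ?_, fun h => ?_, fun h => ?_⟩
  · have := inj a b (by omega) (by omega) (by simpa [sub_eq_zero] using h)
    omega
  · have h' : (a : ZMod L) = ((b + 1 : ℕ) : ZMod L) := by
      push_cast
      linear_combination h
    have := inj a (b + 1) (by omega) (by omega) h'
    omega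
  · have h' : (b : ZMod L) = ((a + 1 : ℕ) : ZMod L) := by
      push_cast
      linear_combination h
    have := inj b (a + 1) (by omega) (by omega) h'
    omega

lemma far_of_height {β : ZMod L} {Z : LConf L k} {j l : Fin k}
    (h1 : height β Z j + 2 ≤ height β Z l) (h2 : height β Z l + 1 < L) :
    far (Z j).2 (Z l).2 := by
  rw [snd_eq_height β Z j, snd_eq_height β Z l]
  exact far_of_nat β h1 h2

lemma height_stretch_lt {β : ZMod L} {X : LConf L k} (hX : cutOK β X) (τ : ℕ) (j : Fin k) :
    height β (stretch β τ X) j + 1 < L := by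
  have h1 := hX.2 j
  have h2 := lift_le τ (rk_lt (height β X) j)
  rw [height_stretch hX]
  omega

/-- The stretching never creates a collision or an adjacency. -/
lemma stretch_valid {β : ZMod L} {X : LConf L k} (hX : cutOK β X) (τ : ℕ) :
    valid (stretch β τ X) := by
  have key : ∀ j l, below (height β X) j l →
      stretch β τ X j ≠ stretch β τ X l ∧ ¬ adj (stretch β τ X j) (stretch β τ X l) := by
    intro j l hjl
    have hrk := rk_lt_rk hjl
    have hmono := lift_mono (τ := τ) hrk (rk_lt _ l)
    have hle : height β X j ≤ height β X l := by
      unfold below at hjl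
      omega
    have hne : j ≠ l := by
      rintro rfl
      exact below_irrefl _ hjl
    by_cases hd : height β (stretch β τ X) j + 2 ≤ height β (stretch β τ X) l
    · exact far.sep (d := false) (far_of_height hd (height_stretch_lt hX τ l))
    rw [height_stretch hX, height_stretch hX] at hd
    have hj0 : lift k τ (rk (height β X) j) = 0 := by
      by_contra h0
      have h1 := lift_full hrk (rk_lt _ l) (Nat.pos_of_ne_zero h0)
      have h2 : lift k τ (rk (height β X) j) ≤ 2 * rk (height β X) j := min_le_left _ _
      omega
    by_cases hl0 : lift k τ (rk (height β X) l) = 0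
    · have hj : stretch β τ X j = X j := by simp [stretch, hj0, dir]
      have hl : stretch β τ X l = X l := by simp [stretch, hl0, dir]
      rw [hj, hl]
      exact hX.1 j l hne
    · -- The upper particle has just left the row it shared with the lower one.
      have hrow : (X j).2 = (X l).2 := by
        rw [snd_eq_height β X j, snd_eq_height β X l, show height β X j = height β X l by omega]
      refine far.sep (d := true) ?_
      obtain ⟨h1, h2⟩ := hX.1 j l hne
      simp only [co, if_true, stretch_fst]
      refine ⟨fun h => h1 ?_, fun h => h2 (Or.inl ?_), fun h => h2 (Or.inr (Or.inr (Or.inl ?_)))⟩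
      · exact Prod.ext (sub_eq_zero.mp h) hrow
      · exact Prod.ext h (by simp [hrow])
      · exact Prod.ext h (by simp [hrow])
  intro j l hjl
  rcases below_total (h := height β X) hjl with h | h
  · exact key j l h
  · exact sep_symm (key l j h)

lemma stretch_rowSep {β : ZMod L} {X : LConf L k} (hX : cutOK β X) :
    rowSep (stretch β (2 * k ^ 2) X) := by
  have key : ∀ j l, below (height β X) j l →
      far (stretch β (2 * k ^ 2) X j).2 (stretch β (2 * k ^ 2) X l).2 := by
    intro j l hjl
    have hrk := rk_lt_rk hjl
    have hle : height β X j ≤ height β X l := by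
      unfold below at hjl
      omega
    refine far_of_height ?_ (height_stretch_lt hX _ l)
    rw [height_stretch hX, height_stretch hX, lift_end (rk_lt _ _), lift_end (rk_lt _ _)]
    omega
  intro j l hjl
  rcases below_total (h := height β X) hjl with h | h
  · exact key j l h
  · exact far_symm (key l j h)

/-- One step of the schedule moves at most one particle, by one unit. -/
lemma stretch_step (F : LConf L k → ℝ) {β : ZMod L} {X : LConf L k} (hX : cutOK β X) (τ : ℕ) :
    (F (stretch β τ X) - F (stretch β (τ + 1) X)) ^ 2
      ≤ ∑ i, edgeSq F i false (stretch β τ X) := by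
  by_cases hmove : ∃ i, lift k (τ + 1) (rk (height β X) i) ≠ lift k τ (rk (height β X) i)
  · obtain ⟨i, hi⟩ := hmove
    have heq : stretch β (τ + 1) X = shift (stretch β τ X) i false 1 := by
      funext j
      by_cases hj : j = i
      · subst hj
        have := (lift_succ τ (rk (height β X) j)).resolve_left hi
        rw [shift_self]
        simp only [stretch, this, Nat.cast_add, Nat.cast_one, dir_add, add_assoc]
      · rw [shift_of_ne _ hj]
        have : lift k (τ + 1) (rk (height β X) j) = lift k τ (rk (height β X) j) := by
          rcases below_total (h := height β X) hj with h | h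
          · by_contra hn
            exact hi (lift_unique (rk_lt_rk h) (rk_lt _ _) hn)
          · exact lift_unique (rk_lt_rk h) (rk_lt _ _) hi
        simp only [stretch, this]
    have hv := stretch_valid hX τ
    have hv' := stretch_valid hX (τ + 1)
    have h1 : edgeSq F i false (stretch β τ X)
        = (F (stretch β τ X) - F (stretch β (τ + 1) X)) ^ 2 := by
      rw [heq] at hv' ⊢
      rw [edgeSq, if_pos ⟨hv, hv'⟩]
    rw [← h1]
    exact single_le_sum (f := fun i => edgeSq F i false (stretch β τ X))
      (fun i _ => edgeSq_nonneg F i false _) (mem_univ i)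
  · push Not at hmove
    have : stretch β (τ + 1) X = stretch β τ X := by
      funext j
      simp only [stretch, hmove j]
    rw [this, sub_self, zero_pow two_ne_zero]
    exact sum_nonneg fun i _ => edgeSq_nonneg F i false _

/-- Stretching is injective on the configurations admitting the cut `β`, so it does not increase
sums of nonnegative functions. -/
lemma sum_stretch_le (β : ZMod L) (τ : ℕ) (φ : LConf L k → ℝ) (hφ : ∀ X, 0 ≤ φ X) :
    ∑ X ∈ univ.filter (fun X => cutOK β X), φ (stretch β τ X) ≤ ∑ X, φ X := by
  have hinj : Set.InjOn (stretch (k := k) β τ)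
      (univ.filter (fun X : LConf L k => cutOK β X) : Finset (LConf L k)) := by
    intro X hX Y hY
    exact stretch_injOn β τ (by simpa using hX) (by simpa using hY)
  rw [← sum_image hinj]
  exact sum_le_univ_sum_of_nonneg hφ

lemma stretch_bound (F : LConf L k → ℝ) (β : ZMod L) :
    ∑ X ∈ univ.filter (fun X => cutOK β X), (F X - F (stretch β (2 * k ^ 2) X)) ^ 2
      ≤ 4 * k ^ 4 * energy F := by
  have hstep : ∀ X ∈ univ.filter (fun X : LConf L k => cutOK β X),
      (F X - F (stretch β (2 * k ^ 2) X)) ^ 2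
        ≤ 2 * k ^ 2 * ∑ τ ∈ range (2 * k ^ 2), ∑ i, edgeSq F i false (stretch β τ X) := by
    intro X hX
    have hX' : cutOK β X := by simpa using hX
    have h0 : F X - F (stretch β (2 * k ^ 2) X)
        = ∑ τ ∈ range (2 * k ^ 2), (F (stretch β τ X) - F (stretch β (τ + 1) X)) := by
      rw [sum_range_sub' (fun τ => F (stretch β τ X)), stretch_zero]
    rw [h0]
    refine sq_sum_le_card_mul_sum_sq.trans ?_
    rw [card_range]
    push_cast
    exact mul_le_mul_of_nonneg_left (sum_le_sum fun τ _ => stretch_step F hX' τ) (by positivity)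
  have hE : ∀ τ, ∑ X ∈ univ.filter (fun X : LConf L k => cutOK β X),
      ∑ i, edgeSq F i false (stretch β τ X) ≤ energy F := by
    intro τ
    refine (sum_stretch_le β τ (fun X => ∑ i, edgeSq F i false X)
      fun X => sum_nonneg fun i _ => edgeSq_nonneg F i false X).trans ?_
    unfold energy
    rw [sum_comm, Fintype.sum_bool]
    exact le_add_of_nonneg_left
      (sum_nonneg fun i _ => sum_nonneg fun W _ => edgeSq_nonneg F i true W)
  refine (sum_le_sum hstep).trans ?_
  rw [← mul_sum, sum_comm]
  calc 2 * (k : ℝ) ^ 2 * ∑ τ ∈ range (2 * k ^ 2),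
        ∑ X ∈ univ.filter (fun X : LConf L k => cutOK β X),
          ∑ i, edgeSq F i false (stretch β τ X)
      ≤ 2 * (k : ℝ) ^ 2 * ∑ _τ ∈ range (2 * k ^ 2), energy F :=
        mul_le_mul_of_nonneg_left (sum_le_sum fun τ _ => hE τ) (by positivity)
    _ = 4 * k ^ 4 * energy F := by
      rw [sum_const, card_range, nsmul_eq_mul]
      push_cast
      ring

end Stretch

/-! ### Counting good configurations and good cuts -/

section Counting

variable {L k : ℕ} [NeZero L]

lemma card_lconf_nat : Fintype.card (LConf L k) = (L ^ 2) ^ k := by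
  exact_mod_cast (card_lconf (L := L) (k := k))

/-- A function that is equivariant for a translation action of `ℤ_L` is equidistributed. -/
lemma fiber_card (D : LConf L k → ZMod L) (g : ZMod L → LConf L k)
    (h : ∀ Y c, D (Y + g c) = D Y + c) (s : ZMod L) :
    (univ.filter fun Y => D Y = s).card * L = (L ^ 2) ^ k := by
  have h1 : ∀ c : ZMod L, ∑ Y : LConf L k, (if D Y + c = s then 1 else 0)
      = (univ.filter fun Y => D Y = s).card := by
    intro c
    rw [card_filter, ← Equiv.sum_comp (Equiv.addRight (g c)) fun Y => if D Y = s then 1 else 0]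
    simp only [Equiv.coe_addRight, h]
  have h2 : ∑ c : ZMod L, ∑ Y : LConf L k, (if D Y + c = s then 1 else 0)
      = (univ.filter fun Y => D Y = s).card * L := by
    rw [sum_congr rfl fun c _ => h1 c, sum_const, card_univ, ZMod.card, smul_eq_mul, mul_comm]
  rw [← h2, sum_comm, ← card_lconf_nat (L := L) (k := k), ← card_univ, card_eq_sum_ones]
  refine sum_congr rfl fun Y _ => ?_
  have : ∀ c : ZMod L, (D Y + c = s) ↔ (c = s - D Y) := by
    intro c
    rw [eq_sub_iff_add_eq, add_comm]
  simp only [this, sum_ite_eq', mem_univ, if_true]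

lemma near_card (A B : LConf L k → ZMod L) (g : ZMod L → LConf L k)
    (h : ∀ Y c, A (Y + g c) - B (Y + g c) = A Y - B Y + c) :
    (univ.filter fun Y => ¬ far (A Y) (B Y)).card * L ≤ 3 * (L ^ 2) ^ k := by
  have hf := fiber_card (fun Y => A Y - B Y) g h
  have hsub : (univ.filter fun Y => ¬ far (A Y) (B Y)) ⊆
      ((univ.filter fun Y => A Y - B Y = 0) ∪ (univ.filter fun Y => A Y - B Y = 1)) ∪
        (univ.filter fun Y => A Y - B Y = -1) := by
    intro Y hY
    simp only [mem_filter, mem_univ, true_and, mem_union] at hY ⊢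
    by_contra hn
    push Not at hn
    refine hY ⟨hn.1.1, hn.1.2, fun h1 => hn.2 ?_⟩
    rw [← neg_sub, h1]
  have h1 := card_le_card hsub
  have h2 := card_union_le
    ((univ.filter fun Y => A Y - B Y = 0) ∪ (univ.filter fun Y => A Y - B Y = 1))
    (univ.filter fun Y => A Y - B Y = -1)
  have h3 := card_union_le
    (univ.filter fun Y => A Y - B Y = 0) (univ.filter fun Y => A Y - B Y = 1)
  have := Nat.mul_le_mul_right L ((h1.trans h2).trans (Nat.add_le_add_right h3 _))
  rw [add_mul, add_mul, hf, hf, hf] at this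
  omega

lemma co_dir {L : ℕ} (d : Bool) (c : ZMod L) : co d (dir d c) = c := by cases d <;> rfl

lemma co_add {L : ℕ} (d : Bool) (u v : Vertex L) : co d (u + v) = co d u + co d v := by cases d <;> rfl

lemma co_shift (Y : LConf L k) (i : Fin k) (d : Bool) (c : ZMod L) :
    co d ((Y + Pi.single i (dir d c) : LConf L k) i) = co d (Y i) + c := by
  rw [Pi.add_apply, Pi.single_eq_same, co_add, co_dir]

lemma bad_card (X : LConf L k) :
    (univ.filter fun Y => ¬ good X Y).card * L ≤ 12 * k ^ 2 * (L ^ 2) ^ k := by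
  let A : Bool × Fin k × Fin k → Finset (LConf L k) := fun q =>
    univ.filter fun Y => q.2.1 ≠ q.2.2 ∧ ¬ far (co q.1 (Y q.2.1)) (co q.1 (Y q.2.2))
  let B : Bool × Fin k × Fin k → Finset (LConf L k) := fun q =>
    univ.filter fun Y => ¬ far (co q.1 (Y q.2.1)) (co q.1 (X q.2.2))
  have hsub : (univ.filter fun Y => ¬ good X Y) ⊆ univ.biUnion fun q => A q ∪ B q := by
    intro Y hY
    simp only [mem_filter, mem_univ, true_and, good, not_and_or, not_forall] at hY
    simp only [mem_biUnion, mem_univ, true_and, mem_union, A, B, mem_filter]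
    rcases hY with ⟨d, i, j, hij, h⟩ | ⟨d, i, j, h⟩
    · exact ⟨(d, i, j), Or.inl ⟨hij, h⟩⟩
    · exact ⟨(d, i, j), Or.inr h⟩
  have hA : ∀ q, (A q).card * L ≤ 3 * (L ^ 2) ^ k := by
    rintro ⟨d, i, j⟩
    by_cases hij : i = j
    · simp [A, hij]
    · have : A (d, i, j) = univ.filter fun Y => ¬ far (co d (Y i)) (co d (Y j)) := by
        simp [A, hij]
      rw [this]
      refine near_card (fun Y => co d (Y i)) (fun Y => co d (Y j))
        (fun c => Pi.single i (dir d c)) fun Y c => ?_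
      have hj : (Y + Pi.single i (dir d c) : LConf L k) j = Y j := by
        simp [Pi.single_eq_of_ne (Ne.symm hij)]
      simp only [co_shift, hj]
      ring
  have hB : ∀ q, (B q).card * L ≤ 3 * (L ^ 2) ^ k := by
    rintro ⟨d, i, j⟩
    refine near_card (fun Y => co d (Y i)) (fun _ => co d (X j))
      (fun c => Pi.single i (dir d c)) fun Y c => ?_
    simp only [co_shift]
    ring
  calc (univ.filter fun Y => ¬ good X Y).card * L
      ≤ (∑ q, (A q ∪ B q).card) * L :=
        Nat.mul_le_mul_right _ ((card_le_card hsub).trans card_biUnion_le)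
    _ = ∑ q, (A q ∪ B q).card * L := sum_mul _ _ _
    _ ≤ ∑ _q : Bool × Fin k × Fin k, 6 * (L ^ 2) ^ k := by
        refine sum_le_sum fun q _ => ?_
        have := Nat.mul_le_mul_right L (card_union_le (A q) (B q))
        rw [add_mul] at this
        have h1 := hA q
        have h2 := hB q
        omega
    _ = 12 * k ^ 2 * (L ^ 2) ^ k := by
        rw [sum_const, card_univ]
        simp only [Fintype.card_prod, Fintype.card_bool, Fintype.card_fin, smul_eq_mul]
        ring

lemma two_good (hkL : 48 * k ^ 2 ≤ L) (X X' : LConf L k) :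
    (L ^ 2) ^ k ≤ 2 * (univ.filter fun Y => good X Y ∧ good X' Y).card := by
  have hL : 0 < L := Nat.pos_of_ne_zero (NeZero.ne L)
  have h1 := card_filter_add_card_filter_not (s := (univ : Finset (LConf L k)))
    (fun Y => good X Y ∧ good X' Y)
  rw [card_univ, card_lconf_nat] at h1
  have hsub : (univ.filter fun Y => ¬ (good X Y ∧ good X' Y)) ⊆
      (univ.filter fun Y => ¬ good X Y) ∪ (univ.filter fun Y => ¬ good X' Y) := by
    intro Y hY
    simp only [mem_filter, mem_univ, true_and, mem_union] at hY ⊢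
    tauto
  have h2 := Nat.mul_le_mul_right L ((card_le_card hsub).trans (card_union_le _ _))
  rw [add_mul] at h2
  have h3 := bad_card X
  have h4 := bad_card X'
  have h5 : 48 * k ^ 2 * (L ^ 2) ^ k ≤ L * (L ^ 2) ^ k := Nat.mul_le_mul_right _ hkL
  have h6 : 2 * (univ.filter fun Y => ¬ (good X Y ∧ good X' Y)).card ≤ (L ^ 2) ^ k := by
    refine Nat.le_of_mul_le_mul_right ?_ hL
    nlinarith
  omega

lemma bad_cut_card (hkL : 48 * k ^ 2 ≤ L) (X : LConf L k) (hX : valid X) :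
    4 * (univ.filter fun β : ZMod L => ¬ cutOK β X).card ≤ L := by
  have hsub : (univ.filter fun β : ZMod L => ¬ cutOK β X) ⊆
      univ.biUnion fun j : Fin k => univ.filter fun β : ZMod L =>
        L ≤ ((X j).2 - β).val + (2 * k + 2) := by
    intro β hβ
    simp only [mem_filter, mem_univ, true_and, cutOK, hX, not_forall, not_lt, height] at hβ
    simpa using hβ
  have hone : ∀ j : Fin k, (univ.filter fun β : ZMod L =>
      L ≤ ((X j).2 - β).val + (2 * k + 2)).card ≤ 2 * k + 2 := by
    intro j
    refine (card_le_card_of_injOn (t := range (2 * k + 2)) (fun β => L - 1 - ((X j).2 - β).val) ?_ ?_).trans (card_range _).le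
    · intro β hβ
      have hlt : ((X j).2 - β).val < L := ZMod.val_lt _
      simp only [coe_filter, mem_univ, true_and, Set.mem_ofPred_eq] at hβ
      simp only [coe_range, Set.mem_Iio]
      omega
    · intro β _ β' _ hβ
      have hlt : ((X j).2 - β).val < L := ZMod.val_lt _
      have hlt' : ((X j).2 - β').val < L := ZMod.val_lt _
      have : ((X j).2 - β).val = ((X j).2 - β').val := by
        simp only at hβ
        omega
      exact sub_right_injective (ZMod.val_injective L this)
  have h1 := (card_le_card hsub).trans (card_biUnion_le.trans (sum_le_sum fun j _ => hone j))
  rw [sum_const, card_univ, Fintype.card_fin, smul_eq_mul] at h1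
  have hk2 : k ≤ k ^ 2 := Nat.le_self_pow two_ne_zero k
  nlinarith

/-- At least half of the cuts are admissible for both configurations. -/
lemma two_cuts (hkL : 48 * k ^ 2 ≤ L) (X X' : LConf L k) (hX : valid X) (hX' : valid X') :
    L ≤ 2 * (univ.filter fun β : ZMod L => cutOK β X ∧ cutOK β X').card := by
  have h1 := card_filter_add_card_filter_not (s := (univ : Finset (ZMod L)))
    (fun β => cutOK β X ∧ cutOK β X')
  rw [card_univ, ZMod.card] at h1
  have hsub : (univ.filter fun β : ZMod L => ¬ (cutOK β X ∧ cutOK β X')) ⊆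
      (univ.filter fun β => ¬ cutOK β X) ∪ (univ.filter fun β => ¬ cutOK β X') := by
    intro Y hY
    simp only [mem_filter, mem_univ, true_and, mem_union] at hY ⊢
    tauto
  have h2 := (card_le_card hsub).trans (card_union_le _ _)
  have h3 := bad_cut_card hkL X hX
  have h4 := bad_cut_card hkL X' hX'
  omega

end Counting

/-! ### The Poincaré inequality for labelled configurations -/

section Poincare

variable {L k : ℕ} [NeZero L]

/-- Comparison of two configurations through a common resampled target. -/
lemma four_point {L k : ℕ} (F : LConf L k → ℝ) (X X' T T' Y : LConf L k) :
    (F X - F X') ^ 2 ≤ 4 * ((F X - F T) ^ 2 + (F X' - F T') ^ 2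
      + ((F T - F Y) ^ 2 + (F T' - F Y) ^ 2)) := by
  nlinarith [sq_nonneg ((F X - F T) + (F X' - F T')), sq_nonneg ((F X - F T) + (F T' - F Y)),
    sq_nonneg ((F T - F Y) + (F X' - F T')), sq_nonneg ((F T - F Y) + (F T' - F Y)),
    sq_nonneg ((F X' - F T') - (F T' - F Y)), sq_nonneg ((F X - F T) - (F T - F Y))]

/-- Two configurations admitting the cut `β` are compared by stretching both and resampling to a
common target `Y`, averaged over the at least `n ^ k / 2` targets that are good for both. -/
lemma poincare_cut (hk : 1 ≤ k) (hkL : 48 * k ^ 2 ≤ L) (F : LConf L k → ℝ) (β : ZMod L) :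
    ∑ X ∈ univ.filter (fun X => cutOK β X), ∑ X' ∈ univ.filter (fun X => cutOK β X),
        (F X - F X') ^ 2
      ≤ 96 * k * ((L : ℝ) ^ 2) ^ (k + 1) * energy F := by
  set S : Finset (LConf L k) := univ.filter (fun X => cutOK β X) with hS
  set T := stretch (k := k) β (2 * k ^ 2) with hT
  set n : ℝ := (L : ℝ) ^ 2 with hn
  have hL0 : (0 : ℝ) < L := Nat.cast_pos.mpr (Nat.pos_of_ne_zero (NeZero.ne L))
  have hn0 : 0 < n := by positivity
  set a : LConf L k → ℝ := fun X => (F X - F (T X)) ^ 2 with ha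
  set b : LConf L k → ℝ := fun X =>
    ∑ Y, (if rowSep X ∧ good X Y then (F X - F Y) ^ 2 else 0) with hb
  have hb0 : ∀ X, 0 ≤ b X := fun X => sum_nonneg fun Y _ => by split_ifs <;> positivity
  have hpair : ∀ X ∈ S, ∀ X' ∈ S,
      n ^ k * (F X - F X') ^ 2
        ≤ 8 * (n ^ k * a X + n ^ k * a X' + (b (T X) + b (T X'))) := by
    intro X hX X' hX'
    have hX1 : cutOK β X := by simpa [hS] using hX
    have hX2 : cutOK β X' := by simpa [hS] using hX'
    set G := univ.filter fun Y => good (T X) Y ∧ good (T X') Y with hG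
    have hcard : n ^ k ≤ 2 * (G.card : ℝ) := by
      have := two_good hkL (T X) (T X')
      rw [hn]
      exact_mod_cast this
    have hGle : (G.card : ℝ) ≤ n ^ k := by
      have h := card_le_univ G
      rw [hn, ← card_lconf (L := L) (k := k)]
      exact_mod_cast h
    have h1 : (G.card : ℝ) * (F X - F X') ^ 2 ≤ ∑ Y ∈ G, 4 * (a X + a X'
        + ((F (T X) - F Y) ^ 2 + (F (T X') - F Y) ^ 2)) := by
      rw [← nsmul_eq_mul, ← sum_const]
      exact sum_le_sum fun Y _ => four_point F X X' (T X) (T X') Y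
    rw [← mul_sum, sum_add_distrib, sum_const, nsmul_eq_mul, sum_add_distrib] at h1
    have hbT : ∀ Z, cutOK β Z → (∀ Y ∈ G, good (T Z) Y) →
        ∑ Y ∈ G, (F (T Z) - F Y) ^ 2 ≤ b (T Z) := by
      intro Z hZ hgood
      calc ∑ Y ∈ G, (F (T Z) - F Y) ^ 2
          = ∑ Y ∈ G, (if rowSep (T Z) ∧ good (T Z) Y then (F (T Z) - F Y) ^ 2 else 0) :=
            sum_congr rfl fun Y hY => by rw [if_pos ⟨stretch_rowSep hZ, hgood Y hY⟩]
        _ ≤ _ := sum_le_univ_sum_of_nonneg fun Y => by split_ifs <;> positivity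
    have h2 := hbT X hX1 fun Y hY => ((mem_filter.mp hY).2).1
    have h3 := hbT X' hX2 fun Y hY => ((mem_filter.mp hY).2).2
    have h4 : (G.card : ℝ) * (a X + a X') ≤ n ^ k * (a X + a X') :=
      mul_le_mul_of_nonneg_right hGle (by positivity)
    have h5 : n ^ k * (F X - F X') ^ 2 ≤ 2 * (G.card : ℝ) * (F X - F X') ^ 2 :=
      mul_le_mul_of_nonneg_right hcard (by positivity)
    linarith
  have hScard : (S.card : ℝ) ≤ n ^ k := by
    have h := card_le_univ S
    rw [hn, ← card_lconf (L := L) (k := k)]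
    exact_mod_cast h
  have hA : ∑ X ∈ S, a X ≤ 4 * k ^ 4 * energy F := stretch_bound F β
  have hA0 : 0 ≤ ∑ X ∈ S, a X := sum_nonneg fun X _ => by positivity
  have hB : ∑ X ∈ S, b (T X) ≤ 2 * k * n ^ (k + 1) * energy F :=
    (sum_stretch_le β (2 * k ^ 2) b hb0).trans (resample_bound F)
  have hB0 : 0 ≤ ∑ X ∈ S, b (T X) := sum_nonneg fun X _ => hb0 _
  have hsum : n ^ k * ∑ X ∈ S, ∑ X' ∈ S, (F X - F X') ^ 2
      ≤ 16 * S.card * (n ^ k * ∑ X ∈ S, a X + ∑ X ∈ S, b (T X)) := by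
    rw [mul_sum, sum_congr rfl fun X _ => mul_sum _ _ _]
    refine (sum_le_sum fun X hX => sum_le_sum fun X' hX' => hpair X hX X' hX').trans
      (le_of_eq ?_)
    simp only [← mul_sum, sum_add_distrib, sum_const, nsmul_eq_mul]
    ring
  have hE := energy_nonneg F
  have hk3 : (k : ℝ) ^ 4 ≤ k * n := by
    have h1 : (48 * (k : ℝ) ^ 2) ≤ L := by exact_mod_cast hkL
    have h2 : (1 : ℝ) ≤ k := by exact_mod_cast hk
    have h3 : (k : ℝ) ^ 2 ≤ L := by nlinarith
    have h4 : (k : ℝ) ^ 4 ≤ n := by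
      rw [hn]
      calc (k : ℝ) ^ 4 = (k ^ 2) ^ 2 := by ring
        _ ≤ _ := pow_le_pow_left₀ (by positivity) h3 2
    nlinarith
  have h1 : n ^ k * ∑ X ∈ S, ∑ X' ∈ S, (F X - F X') ^ 2
      ≤ n ^ k * (16 * (n ^ k * (4 * k ^ 4 * energy F) + 2 * k * n ^ (k + 1) * energy F)) := by
    refine hsum.trans ?_
    have h2 : n ^ k * ∑ X ∈ S, a X + ∑ X ∈ S, b (T X)
        ≤ n ^ k * (4 * k ^ 4 * energy F) + 2 * k * n ^ (k + 1) * energy F :=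
      add_le_add (mul_le_mul_of_nonneg_left hA (by positivity)) hB
    calc _ ≤ 16 * n ^ k * (n ^ k * ∑ X ∈ S, a X + ∑ X ∈ S, b (T X)) := by gcongr
      _ ≤ 16 * n ^ k * (n ^ k * (4 * k ^ 4 * energy F) + 2 * k * n ^ (k + 1) * energy F) := by
        gcongr
      _ = _ := by ring
  refine (le_of_mul_le_mul_left h1 (by positivity)).trans ?_
  have h2 : n ^ k * (4 * k ^ 4 * energy F) ≤ n ^ k * (4 * (k * n) * energy F) := by gcongr
  calc _ ≤ 16 * (n ^ k * (4 * (k * n) * energy F) + 2 * k * n ^ (k + 1) * energy F) := by gcongr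
    _ = _ := by ring

/-- Poincaré inequality for the labelled exclusion dynamics, obtained by averaging over cuts. -/
theorem poincare_labelled (hk : 1 ≤ k) (hkL : 48 * k ^ 2 ≤ L) (F : LConf L k → ℝ) :
    ∑ X ∈ univ.filter (fun X : LConf L k => valid X),
        ∑ X' ∈ univ.filter (fun X : LConf L k => valid X), (F X - F X') ^ 2
      ≤ 192 * k * ((L : ℝ) ^ 2) ^ (k + 1) * energy F := by
  have hL0 : (0 : ℝ) < L := Nat.cast_pos.mpr (Nat.pos_of_ne_zero (NeZero.ne L))
  have hpt : ∀ X X' : LConf L k, L * (if valid X ∧ valid X' then (F X - F X') ^ 2 else 0)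
      ≤ 2 * ∑ β : ZMod L, (if cutOK β X ∧ cutOK β X' then (F X - F X') ^ 2 else 0) := by
    intro X X'
    rw [← sum_filter, sum_const, nsmul_eq_mul]
    split_ifs with h
    · have := two_cuts hkL X X' h.1 h.2
      have h' : (L : ℝ) ≤ 2 * (univ.filter fun β : ZMod L => cutOK β X ∧ cutOK β X').card := by
        exact_mod_cast this
      rw [← mul_assoc]
      exact mul_le_mul_of_nonneg_right h' (by positivity)
    · rw [mul_zero]
      positivity
  have hconv : ∀ P : LConf L k → Prop,
      ∑ X ∈ univ.filter (fun X => P X), ∑ X' ∈ univ.filter (fun X => P X), (F X - F X') ^ 2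
        = ∑ X, ∑ X', (if P X ∧ P X' then (F X - F X') ^ 2 else 0) := by
    intro P
    rw [sum_filter]
    refine sum_congr rfl fun X _ => ?_
    by_cases hX : P X
    · simp only [hX, if_true, true_and, sum_filter]
    · simp [hX]
  have hβ := sum_le_sum fun β (_ : β ∈ (univ : Finset (ZMod L))) => poincare_cut hk hkL F β
  rw [sum_const, card_univ, ZMod.card, nsmul_eq_mul] at hβ
  simp only [hconv] at hβ ⊢
  have h1 := sum_le_sum fun X (_ : X ∈ (univ : Finset (LConf L k))) =>
    sum_le_sum fun X' (_ : X' ∈ (univ : Finset (LConf L k))) => hpt X X'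
  simp only [← mul_sum] at h1
  have h2 : ∀ G : LConf L k → LConf L k → ZMod L → ℝ,
      ∑ X, ∑ X', ∑ β, G X X' β = ∑ β, ∑ X, ∑ X', G X X' β := by
    intro G
    rw [sum_congr rfl fun X _ => sum_comm, sum_comm]
  rw [h2] at h1
  refine le_of_mul_le_mul_left (h1.trans ?_) hL0
  linarith

end Poincare

/-! ### From labelled to unlabelled configurations -/

section Unlabelled

variable {L k : ℕ} [NeZero L]

/-- The configuration occupied exactly at the positions of the labelled particles. -/
def toConf (X : LConf L k) : Config L := fun v => decide (∃ i, X i = v)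

lemma toConf_eq_true {X : LConf L k} {v : Vertex L} : toConf X v = true ↔ ∃ i, X i = v := by
  simp [toConf]

lemma valid.injective {L k : ℕ} {X : LConf L k} (hX : valid X) : Function.Injective X := by
  intro i j hij
  by_contra hne
  exact (hX i j hne).1 hij

lemma toConf_mem (hL : 2 ≤ L) {X : LConf L k} (hX : valid X) : toConf X ∈ OmegaSet L k := by
  refine ⟨?_, ?_⟩
  · have : (univ.filter fun v => toConf X v = true) = univ.image X := by
      ext v
      simp [toConf]
    rw [numParticles, this, card_image_of_injective _ hX.injective, card_univ, Fintype.card_fin]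
  · rintro u v huv ⟨hu, hv⟩
    obtain ⟨i, rfl⟩ := toConf_eq_true.mp hu
    obtain ⟨j, rfl⟩ := toConf_eq_true.mp hv
    by_cases hij : i = j
    · subst hij
      exact not_adj_self hL _ huv
    · exact (hX i j hij).2 huv

/-- Every configuration of `Ω_k` has exactly `k!` labellings. -/
lemma card_labellings (x : OmegaType L k) :
    (univ.filter fun X : LConf L k => valid X ∧ toConf X = x.1).card = k.factorial := by
  have hcard : Fintype.card (Fin k) = Fintype.card {v // x.1 v = true} := by
    have h : numParticles x.1 = k := x.2.1
    rw [Fintype.card_fin, Fintype.card_subtype]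
    exact h.symm
  have h1 := Fintype.card_equiv (Fintype.equivOfCardEq hcard)
  rw [Fintype.card_fin] at h1
  rw [← h1, ← card_univ]
  symm
  refine card_bij (fun e _ => fun i => (e i).1) ?_ ?_ ?_
  · intro e _
    simp only [mem_filter, mem_univ, true_and]
    refine ⟨fun i j hij => ⟨fun h => hij ?_, fun h => ?_⟩, ?_⟩
    · exact e.injective (Subtype.ext h)
    · exact x.2.2 _ _ h ⟨(e i).2, (e j).2⟩
    · funext v
      rw [Bool.eq_iff_iff, toConf_eq_true]
      constructor
      · rintro ⟨i, rfl⟩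
        exact (e i).2
      · intro hv
        exact ⟨e.symm ⟨v, hv⟩, by simp⟩
  · intro e _ e' _ h
    ext i
    exact congrArg Prod.fst (congrFun h i) |>.symm ▸ rfl
    exact congrArg Prod.snd (congrFun h i) |>.symm ▸ rfl
  · intro X hX
    simp only [mem_filter, mem_univ, true_and] at hX
    have hocc : ∀ i, x.1 (X i) = true := by
      intro i
      rw [← hX.2]
      exact toConf_eq_true.mpr ⟨i, rfl⟩
    have hbij : Function.Bijective (fun i => (⟨X i, hocc i⟩ : {v // x.1 v = true})) := by
      constructor
      · intro i j hij
        exact hX.1.injective (congrArg Subtype.val hij)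
      · rintro ⟨v, hv⟩
        rw [← hX.2] at hv
        obtain ⟨i, hi⟩ := toConf_eq_true.mp hv
        exact ⟨i, Subtype.ext hi⟩
    exact ⟨Equiv.ofBijective _ hbij, mem_univ _, rfl⟩

lemma sum_toConf (hL : 2 ≤ L) (g : Config L → ℝ) :
    ∑ X ∈ univ.filter (fun X : LConf L k => valid X), g (toConf X)
      = k.factorial * ∑ x : OmegaType L k, g x.1 := by
  have hmaps : ∀ X ∈ univ.filter (fun X : LConf L k => valid X),
      toConf X ∈ univ.filter (fun x : Config L => x ∈ OmegaSet L k) := by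
    intro X hX
    simpa using toConf_mem hL (mem_filter.mp hX).2
  rw [← sum_fiberwise_of_maps_to hmaps]
  rw [sum_subtype (p := fun x => x ∈ OmegaSet L k) _ (by simp), mul_sum]
  refine sum_congr rfl fun x _ => ?_
  rw [filter_filter, sum_congr rfl fun X hX => by rw [((mem_filter.mp hX).2).2], sum_const,
    card_labellings, nsmul_eq_mul]

lemma dir_one_ne_zero (hL : 2 ≤ L) (d : Bool) : dir d (1 : ZMod L) ≠ 0 := by
  have : Fact (1 < L) := ⟨hL⟩
  cases d <;> simp [dir, Prod.ext_iff]

lemma adj_dir (u : Vertex L) (d : Bool) : adj u (u + dir d 1) := by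
  cases d <;> simp [adj, dir]

/-- A valid move of particle `i` empties the site `W i`. -/
lemma toConf_shift_self (hL : 2 ≤ L) {W : LConf L k} (hW : valid W) (i : Fin k) (d : Bool) :
    toConf (shift W i d 1) (W i) = false := by
  rw [← Bool.not_eq_true, toConf_eq_true]
  rintro ⟨j, hj⟩
  by_cases hji : j = i
  · subst hji
    rw [shift_self] at hj
    exact dir_one_ne_zero hL d (by simpa using hj)
  · rw [shift_of_ne _ hji] at hj
    exact (hW j i hji).1 hj

lemma toConf_empty (hL : 2 ≤ L) {W : LConf L k} (hW : valid W) (i : Fin k) (d : Bool) :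
    toConf W (W i + dir d 1) = false := by
  rw [← Bool.not_eq_true, toConf_eq_true]
  rintro ⟨j, hj⟩
  by_cases hji : j = i
  · subst hji
    exact dir_one_ne_zero hL d (by simpa using hj.symm)
  · refine (hW i j (Ne.symm hji)).2 ?_
    rw [hj]
    exact adj_dir _ _

lemma toConf_shift (hL : 2 ≤ L) {W : LConf L k} (hW : valid W) (i : Fin k) (d : Bool) :
    toConf (shift W i d 1)
      = Function.update (Function.update (toConf W) (W i + dir d 1) true) (W i) false := by
  funext z
  by_cases hz : z = W i
  · subst hz
    rw [Function.update_self, toConf_shift_self hL hW]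
  rw [Function.update_of_ne hz]
  by_cases hz' : z = W i + dir d 1
  · subst hz'
    rw [Function.update_self, toConf_eq_true]
    exact ⟨i, shift_self W i d 1⟩
  rw [Function.update_of_ne hz', Bool.eq_iff_iff, toConf_eq_true, toConf_eq_true]
  constructor
  · rintro ⟨j, hj⟩
    by_cases hji : j = i
    · subst hji
      rw [shift_self] at hj
      exact absurd hj.symm hz'
    · rw [shift_of_ne _ hji] at hj
      exact ⟨j, hj⟩
  · rintro ⟨j, hj⟩
    have hji : j ≠ i := by
      rintro rfl
      exact hz hj.symm
    exact ⟨j, by rw [shift_of_ne _ hji, hj]⟩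

/-- Lower bound for the trace-kernel probability of a nearest-neighbour move. -/
def moveRate (L : ℕ) (c : ℝ) : ℝ := c / (2 * (2 + c)) / ((L : ℝ) ^ 2) ^ 2

/-- Extension by zero of a function on `Ω_k` to all configurations. -/
def extend (f : OmegaType L k → ℝ) (x : Config L) : ℝ :=
  if h : x ∈ OmegaSet L k then f ⟨x, h⟩ else 0

lemma extend_coe (f : OmegaType L k → ℝ) (x : OmegaType L k) : extend f x.1 = f x := by
  simp [extend]

/-- For a fixed labelling, the moves in a given direction lead to distinct configurations, so
their energy is controlled by the transitions of the trace kernel. -/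
lemma edge_le_trace (hL : 2 ≤ L) {c : ℝ} (hc : 0 < c) (hcL : 2 * c ≤ (L : ℝ) ^ 2)
    (f : OmegaType L k → ℝ) (d : Bool) (W : LConf L k) (hW : valid W) :
    moveRate L c * ∑ i, edgeSq (fun X => extend f (toConf X)) i d W
      ≤ ∑ y, (extend f (toConf W) - f y) ^ 2 *
        traceKernel (kcipKernel L (c / (L : ℝ) ^ 2)) (OmegaSet L k)
          ⟨toConf W, toConf_mem hL hW⟩ y := by
  set Q := traceKernel (kcipKernel L (c / (L : ℝ) ^ 2)) (OmegaSet L k) with hQ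
  have hn0 : (0 : ℝ) < (L : ℝ) ^ 2 := lt_of_le_of_ne (by positivity) (Ne.symm sq_ne_zero')
  have hp0 : 0 ≤ c / (L : ℝ) ^ 2 := by positivity
  have hp1 : c / (L : ℝ) ^ 2 ≤ 1 := by rw [div_le_one hn0]; linarith
  have hQ0 : ∀ x y, 0 ≤ Q x y := traceKernel_nonneg (kcipKernel_nonneg hp0 hp1)
  let φ : {i : Fin k // valid (shift W i d 1)} → OmegaType L k :=
    fun i => ⟨toConf (shift W i.1 d 1), toConf_mem hL i.2⟩
  have hinj : Function.Injective φ := by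
    rintro ⟨i, hi⟩ ⟨j, hj⟩ hij
    by_contra hne
    have hne' : i ≠ j := fun h => hne (Subtype.ext h)
    have h1 : toConf (shift W i d 1) (W i) = toConf (shift W j d 1) (W i) :=
      congrFun (congrArg Subtype.val hij) (W i)
    rw [toConf_shift_self hL hW, eq_comm] at h1
    have h2 : toConf (shift W j d 1) (W i) = true :=
      toConf_eq_true.mpr ⟨i, shift_of_ne W hne' d 1⟩
    rw [h1] at h2
    exact Bool.false_ne_true h2
  have hsum : ∑ i, edgeSq (fun X => extend f (toConf X)) i d W
      = ∑ i : {i : Fin k // valid (shift W i d 1)}, (extend f (toConf W) - f (φ i)) ^ 2 := by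
    simp only [edgeSq, hW, true_and]
    rw [← sum_filter, sum_subtype (p := fun i => valid (shift W i d 1)) _ (by simp)]
    refine sum_congr rfl fun i _ => ?_
    rw [← extend_coe f (φ i)]
  rw [hsum, mul_sum]
  calc _ ≤ ∑ i, (extend f (toConf W) - f (φ i)) ^ 2 * Q ⟨toConf W, toConf_mem hL hW⟩ (φ i) := by
        refine sum_le_sum fun i _ => ?_
        rw [mul_comm]
        refine mul_le_mul_of_nonneg_left ?_ (by positivity)
        exact traceKernel_move_ge hL hc hcL _ (φ i) (W i.1) (W i.1 + dir d 1) (adj_dir _ _)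
          (toConf_eq_true.mpr ⟨i.1, rfl⟩) (toConf_empty hL hW i.1 d) (toConf_shift hL hW i.1 d)
    _ = ∑ y ∈ univ.image φ, (extend f (toConf W) - f y) ^ 2 *
          Q ⟨toConf W, toConf_mem hL hW⟩ y :=
        (sum_image (f := fun y => (extend f (toConf W) - f y) ^ 2 *
          Q ⟨toConf W, toConf_mem hL hW⟩ y) hinj.injOn).symm
    _ ≤ _ := sum_le_univ_sum_of_nonneg fun y => mul_nonneg (by positivity) (hQ0 _ _)

lemma energy_le_trace (hL : 2 ≤ L) {c : ℝ} (hc : 0 < c) (hcL : 2 * c ≤ (L : ℝ) ^ 2)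
    (f : OmegaType L k → ℝ) :
    moveRate L c * energy (fun X : LConf L k => extend f (toConf X))
      ≤ 2 * (k.factorial * ∑ x, ∑ y, (f x - f y) ^ 2 *
        traceKernel (kcipKernel L (c / (L : ℝ) ^ 2)) (OmegaSet L k) x y) := by
  set Q := traceKernel (kcipKernel L (c / (L : ℝ) ^ 2)) (OmegaSet L k) with hQ
  let g : Config L → ℝ := fun x =>
    if h : x ∈ OmegaSet L k then ∑ y, (f ⟨x, h⟩ - f y) ^ 2 * Q ⟨x, h⟩ y else 0
  have hg : ∀ x : OmegaType L k, g x.1 = ∑ y, (f x - f y) ^ 2 * Q x y := by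
    intro x
    simp [g]
  have hd : ∀ d, moveRate L c * ∑ i, ∑ W, edgeSq (fun X : LConf L k => extend f (toConf X)) i d W
      ≤ k.factorial * ∑ x, ∑ y, (f x - f y) ^ 2 * Q x y := by
    intro d
    rw [sum_comm, mul_sum]
    have hvalid : ∑ W : LConf L k,
          moveRate L c * ∑ i, edgeSq (fun X : LConf L k => extend f (toConf X)) i d W
        = ∑ W ∈ univ.filter (fun W : LConf L k => valid W),
          moveRate L c * ∑ i, edgeSq (fun X : LConf L k => extend f (toConf X)) i d W := by
      rw [sum_filter]
      refine sum_congr rfl fun W _ => ?_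
      split_ifs with h
      · rfl
      · simp [edgeSq, h]
    rw [hvalid, ← sum_congr rfl fun x _ => hg x, ← sum_toConf hL g]
    refine sum_le_sum fun W hW => ?_
    have hW' : valid W := (mem_filter.mp hW).2
    refine (edge_le_trace hL hc hcL f d W hW').trans (le_of_eq ?_)
    have h1 := hg ⟨toConf W, toConf_mem hL hW'⟩
    have h2 := extend_coe f ⟨toConf W, toConf_mem hL hW'⟩
    simp only at h1 h2
    rw [h1, h2]
  unfold energy
  rw [Fintype.sum_bool, mul_add]
  have h1 := hd true
  have h2 := hd false
  linarith

lemma factorial_mul_card (hL : 2 ≤ L) :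
    (k.factorial : ℝ) * Fintype.card (OmegaType L k)
      = (univ.filter fun X : LConf L k => valid X).card := by
  have := sum_toConf (k := k) hL fun _ => 1
  simpa using this.symm

lemma card_omega_le (hL : 2 ≤ L) : (Fintype.card (OmegaType L k) : ℝ) ≤ ((L : ℝ) ^ 2) ^ k := by
  have h1 : ((univ.filter fun X : LConf L k => valid X).card : ℝ) ≤ ((L : ℝ) ^ 2) ^ k := by
    rw [← card_lconf (L := L) (k := k)]
    exact_mod_cast card_le_univ _
  have h2 : (1 : ℝ) ≤ k.factorial := by exact_mod_cast Nat.factorial_pos k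
  have h3 : (0 : ℝ) ≤ Fintype.card (OmegaType L k) := by positivity
  rw [← factorial_mul_card hL] at h1
  nlinarith

lemma card_omega_ge (hL : 2 ≤ L) (hkL : 48 * k ^ 2 ≤ L) :
    ((L : ℝ) ^ 2) ^ k ≤ 2 * (k.factorial * Fintype.card (OmegaType L k)) := by
  rw [factorial_mul_card hL]
  have h1 := two_good hkL (0 : LConf L k) 0
  have h2 : (univ.filter fun Y : LConf L k => good 0 Y ∧ good 0 Y).card
      ≤ (univ.filter fun X : LConf L k => valid X).card := by
    refine card_le_card fun Y hY => ?_
    simp only [mem_filter, mem_univ, true_and] at hY ⊢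
    exact hY.1.valid
  exact_mod_cast h1.trans (Nat.mul_le_mul_left 2 h2)

lemma poincare_arith {c n κ a D S E M N : ℝ} (hc : 0 < c) (hn : 0 < n) (hκ : 0 ≤ κ)
    (ha : 0 < a) (hD : 0 ≤ D) (hN : 0 ≤ N) (h1 : a * (a * S) ≤ 192 * κ * (N * n) * E)
    (h2 : c / (2 * (2 + c)) / n ^ 2 * E ≤ 2 * (a * D)) (h3 : N ≤ 2 * (a * M)) :
    S ≤ 1536 * (2 + c) / c * κ * n ^ 3 * M * D := by
  have hE : E ≤ 4 * (2 + c) / c * n ^ 2 * (a * D) := by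
    have : E = 2 * (2 + c) / c * n ^ 2 * (c / (2 * (2 + c)) / n ^ 2 * E) := by
      field_simp
    rw [this]
    calc _ ≤ 2 * (2 + c) / c * n ^ 2 * (2 * (a * D)) :=
          mul_le_mul_of_nonneg_left h2 (by positivity)
      _ = _ := by ring
  have h5 : a * (a * S) ≤ a * (a * (1536 * (2 + c) / c * κ * n ^ 3 * M * D)) := by
    calc a * (a * S) ≤ 192 * κ * (N * n) * E := h1
      _ ≤ 192 * κ * (N * n) * (4 * (2 + c) / c * n ^ 2 * (a * D)) :=
          mul_le_mul_of_nonneg_left hE (by positivity)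
      _ = N * (768 * κ * n ^ 3 * (2 + c) / c * (a * D)) := by ring
      _ ≤ (2 * (a * M)) * (768 * κ * n ^ 3 * (2 + c) / c * (a * D)) :=
          mul_le_mul_of_nonneg_right h3 (by positivity)
      _ = _ := by ring
  exact le_of_mul_le_mul_left (le_of_mul_le_mul_left h5 ha) ha

/-- Poincaré inequality for the trace of the KCIP on `Ω_k`. -/
theorem trace_poincare (hL : 2 ≤ L) {c : ℝ} (hc : 0 < c) (hcL : 2 * c ≤ (L : ℝ) ^ 2)
    (hk : 1 ≤ k) (hkL : 48 * k ^ 2 ≤ L) (f : OmegaType L k → ℝ) :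
    ∑ x, ∑ y, (f x - f y) ^ 2
      ≤ 1536 * (2 + c) / c * k * ((L : ℝ) ^ 2) ^ 3 * Fintype.card (OmegaType L k) *
        ∑ x, ∑ y, (f x - f y) ^ 2 *
          traceKernel (kcipKernel L (c / (L : ℝ) ^ 2)) (OmegaSet L k) x y := by
  set D := ∑ x, ∑ y, (f x - f y) ^ 2 *
    traceKernel (kcipKernel L (c / (L : ℝ) ^ 2)) (OmegaSet L k) x y with hD
  have hn0 : (0 : ℝ) < (L : ℝ) ^ 2 := lt_of_le_of_ne (by positivity) (Ne.symm sq_ne_zero')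
  have hp0 : 0 ≤ c / (L : ℝ) ^ 2 := by positivity
  have hp1 : c / (L : ℝ) ^ 2 ≤ 1 := by rw [div_le_one hn0]; linarith
  have hD0 : 0 ≤ D := sum_nonneg fun x _ => sum_nonneg fun y _ =>
    mul_nonneg (by positivity) (traceKernel_nonneg (kcipKernel_nonneg hp0 hp1) x y)
  have h1 := poincare_labelled hk hkL (fun X => extend f (toConf X))
  have h2 := energy_le_trace hL hc hcL f
  have h3 := card_omega_ge hL hkL
  rw [← hD] at h2
  have h4 : ∑ X ∈ univ.filter (fun X : LConf L k => valid X),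
        ∑ X' ∈ univ.filter (fun X : LConf L k => valid X),
          (extend f (toConf X) - extend f (toConf X')) ^ 2
      = k.factorial * (k.factorial * ∑ x, ∑ y, (f x - f y) ^ 2) := by
    rw [sum_congr rfl fun X _ => sum_toConf hL fun y => (extend f (toConf X) - extend f y) ^ 2]
    rw [sum_toConf hL fun x => k.factorial * ∑ y : OmegaType L k, (extend f x - extend f y.1) ^ 2]
    simp only [extend_coe, mul_sum]
  rw [h4] at h1
  have ha : (0 : ℝ) < (k.factorial : ℝ) := by exact_mod_cast Nat.factorial_pos k
  rw [pow_succ] at h1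
  unfold moveRate at h2
  exact poincare_arith hc hn0 (Nat.cast_nonneg k) ha hD0 (by positivity) h1 h2 h3

end Unlabelled

/-! ### Gap and mixing time of the trace -/

section Final

variable {L k : ℕ} [NeZero L]

/-- The Poincaré inequality `trace_poincare`, fed into the general bounds for the spectral gap
and for the mixing time of a lazy reversible chain whose invariant law is uniform on at most
`n ^ k` states. -/
theorem trace_bounds (hL : 2 ≤ L) {c : ℝ} (hc : 0 < c) (hcL : 2 * c ≤ (L : ℝ) ^ 2)
    (hk : 1 ≤ k) (hkL : 48 * k ^ 2 ≤ L) :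
    (mixingTime (traceKernel (kcipKernel L (c / (L : ℝ) ^ 2)) (OmegaSet L k))
        (condDist (kcipStationary L (c / (L : ℝ) ^ 2)) (OmegaSet L k)) : ℝ)
      ≤ Real.log (8 * ((L : ℝ) ^ 2) ^ k) * (1536 * (2 + c) / c * k * ((L : ℝ) ^ 2) ^ 3) + 1 ∧
    1 / spectralGap (traceKernel (kcipKernel L (c / (L : ℝ) ^ 2)) (OmegaSet L k))
        (condDist (kcipStationary L (c / (L : ℝ) ^ 2)) (OmegaSet L k))
      ≤ 1536 * (2 + c) / c * k * ((L : ℝ) ^ 2) ^ 3 := by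
  have hn4 : (4 : ℝ) ≤ (L : ℝ) ^ 2 := by
    have : (2 : ℝ) ≤ L := by exact_mod_cast hL
    nlinarith
  have hn0 : (0 : ℝ) < (L : ℝ) ^ 2 := by linarith
  have hp0 : 0 < c / (L : ℝ) ^ 2 := by positivity
  have hp2 : c / (L : ℝ) ^ 2 ≤ 1 / 2 := by rw [div_le_iff₀ hn0]; linarith
  have hpoin := trace_poincare hL hc hcL hk hkL
  have hup := card_omega_le (k := k) hL
  have hge := card_omega_ge hL hkL
  generalize c / (L : ℝ) ^ 2 = p at *
  have hp1 : p < 1 := by linarith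
  have hK := kcipKernel_nonneg (L := L) hp0.le hp1.le
  have hπ := condDist_omega (L := L) hp0 hp1 hk
  have hM : (0 : ℝ) < (Fintype.card (OmegaType L k) : ℝ) := by
    have h1 : (0 : ℝ) < ((L : ℝ) ^ 2) ^ k := by positivity
    rcases Nat.eq_zero_or_pos (Fintype.card (OmegaType L k)) with h | h
    · rw [h] at hge
      simp only [Nat.cast_zero, mul_zero] at hge
      linarith
    · exact_mod_cast h
  set Q := traceKernel (kcipKernel L p) (OmegaSet L k) with hQdef
  set π := condDist (kcipStationary L p) (OmegaSet L k) with hπdef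
  set M : ℝ := (Fintype.card (OmegaType L k) : ℝ) with hMdef
  have hQ0 : ∀ x y, 0 ≤ Q x y := fun x y => traceKernel_nonneg hK x y
  have hw := levelWeight_pos (L := L) hp0 hp1 k
  have hQ1 : ∀ x, ∑ y, Q x y = 1 := fun x =>
    traceKernel_sum hK kcipKernel_sum (kcipStationary_nonneg hp0.le hp1.le)
      (kcip_stationary hL) x (by rw [kcipStationary_omega hk x]; exact hw)
  have hsymm : ∀ x y, Q x y = Q y x := by
    intro x y
    have h := traceKernel_reversible (A := OmegaSet L k)
      (kcip_reversible (L := L) (p := p) hL) x y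
    rw [kcipStationary_omega hk x, kcipStationary_omega hk y] at h
    exact mul_left_cancel₀ hw.ne' h
  have hπ1 : ∑ x, π x = 1 := by
    rw [sum_congr rfl fun x _ => hπ x, sum_const, card_univ, nsmul_eq_mul]
    exact mul_one_div_cancel hM.ne'
  have hpos : ∀ x, 0 < π x := fun x => by rw [hπ x]; positivity
  have hrev : ∀ x y, π x * Q x y = π y * Q y x := fun x y => by
    rw [hπ x, hπ y, hsymm x y]
  have hlazy : ∀ x, 1 / 2 ≤ Q x x := fun x => by
    have h1 := kcipKernel_self_omega (L := L) hp0.le x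
    have h2 := le_traceKernel hK kcipKernel_sum x x
    linarith
  have hk1 : (1 : ℝ) ≤ k := by exact_mod_cast hk
  set G : ℝ := 1536 * (2 + c) / c * k * ((L : ℝ) ^ 2) ^ 3 with hG
  have hG1 : 1 ≤ G := by
    have h1 : (1 : ℝ) ≤ 1536 * (2 + c) / c := by
      rw [le_div_iff₀ hc]; linarith
    have h2 : (1 : ℝ) ≤ ((L : ℝ) ^ 2) ^ 3 := one_le_pow₀ (by linarith)
    exact one_le_mul_of_one_le_of_one_le (one_le_mul_of_one_le_of_one_le h1 hk1) h2
  have hG0 : 0 < G := by linarith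
  have hvar : ∀ f, varForm π f = 1 / 2 * (1 / M * (1 / M)) * ∑ x, ∑ y, (f x - f y) ^ 2 := by
    intro f
    simp only [varForm, hπ, sq_abs, mul_sum]
    exact sum_congr rfl fun x _ => sum_congr rfl fun y _ => by ring
  have hdir : ∀ f, dirichletForm Q π f
      = 1 / 2 * (1 / M) * ∑ x, ∑ y, (f x - f y) ^ 2 * Q x y := by
    intro f
    simp only [dirichletForm, hπ, sq_abs, mul_sum]
    exact sum_congr rfl fun x _ => sum_congr rfl fun y _ => by ring
  have hgap : ∀ f, 1 / G * varForm π f ≤ dirichletForm Q π f := by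
    intro f
    rw [hvar, hdir]
    calc _ ≤ 1 / G * (1 / 2 * (1 / M * (1 / M)) *
          (G * M * ∑ x, ∑ y, (f x - f y) ^ 2 * Q x y)) := by
          have := hpoin f
          have h0 : (0 : ℝ) ≤ 1 / 2 * (1 / M * (1 / M)) := by positivity
          have h1 : (0 : ℝ) ≤ 1 / G := by positivity
          exact mul_le_mul_of_nonneg_left (mul_le_mul_of_nonneg_left this h0) h1
      _ = _ := by field_simp
  have hvar0 : ∀ f, 0 ≤ varForm π f := fun f => by
    rw [hvar]
    exact mul_nonneg (by positivity) (sum_nonneg fun x _ => sum_nonneg fun y _ => sq_nonneg _)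
  refine ⟨?_, ?_⟩
  · have h := mixingTime_le (Q := Q) (π := π) (γ := 1 / G) (B := ((L : ℝ) ^ 2) ^ k)
      hQ0 hQ1 hpos hπ1 hrev hlazy (by positivity) ((div_le_one hG0).2 hG1) hgap
      (one_le_pow₀ (by linarith)) (fun x => by rw [hπ x, one_div_one_div]; exact hup)
    rwa [div_div_eq_mul_div, div_one] at h
  · have h := one_div_spectralGap_le (Q := Q) (π := π) (γ := 1 / G) (by positivity) hvar0 hgap
    rwa [one_div_one_div] at h

/-- For large `L` every `k ≤ r log n` satisfies the sparsity requirement `48 k² ≤ L`. -/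
lemma eventually_sparse (c r : ℝ) : ∃ L₀ : ℕ, ∀ L : ℕ, L₀ < L →
    3 ≤ L ∧ 2 * c ≤ (L : ℝ) ^ 2 ∧
      ∀ k : ℕ, (k : ℝ) ≤ r * Real.log ((L : ℝ) ^ 2) → 48 * k ^ 2 ≤ L := by
  have h1 : ∀ᶠ L : ℕ in Filter.atTop, 3 ≤ L := Filter.eventually_ge_atTop 3
  have h2 : ∀ᶠ L : ℕ in Filter.atTop, 2 * c ≤ (L : ℝ) :=
    tendsto_natCast_atTop_atTop.eventually_ge_atTop _
  have h3 : ∀ᶠ L : ℕ in Filter.atTop, ‖Real.log (L : ℝ) ^ 2‖ ≤ 1 / (192 * r ^ 2 + 1) * ‖(L : ℝ)‖ :=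
    tendsto_natCast_atTop_atTop.eventually
      ((Real.isLittleO_pow_log_id_atTop (n := 2)).bound (by positivity))
  obtain ⟨L₀, h⟩ := Filter.eventually_atTop.1 (h1.and (h2.and h3))
  refine ⟨L₀, fun L hL => ?_⟩
  obtain ⟨a, b, d⟩ := h L hL.le
  have hL3 : (3 : ℝ) ≤ L := by exact_mod_cast a
  refine ⟨a, by nlinarith, fun k hk => ?_⟩
  rw [Real.norm_of_nonneg (by positivity), Real.norm_of_nonneg (by positivity),
    one_div_mul_eq_div, le_div_iff₀ (by positivity)] at d
  rw [Real.log_pow] at hk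
  have hk2 : (k : ℝ) ^ 2 ≤ (r * ((2 : ℕ) * Real.log L)) ^ 2 :=
    pow_le_pow_left₀ (Nat.cast_nonneg k) hk 2
  push_cast at hk2
  have : (48 * (k : ℝ) ^ 2) ≤ L := by nlinarith [sq_nonneg (Real.log L)]
  exact_mod_cast this

end Final

/-- mixing of the trace of the KCIP on `Ω_k`. Fix `r ≥ 1`. There is a
constant `C = C(c,r)` such that for all `n = L²` large and uniformly in `1 ≤ k ≤ r log n`,
the trace kernel `Q_{n,k}` of the KCIP on `Ω_k` satisfies `τ_{n,k} ≤ C n³ (log n)³` and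
`1/(1 - β₁(Q_{n,k})) ≤ C n³ (log n)²`. -/
theorem kcip_trace_mixing_and_gap (c r : ℝ) (hc : 0 < c) (hr : 1 ≤ r) :
    ∃ (C : ℝ) (N : ℕ), 0 < C ∧
      ∀ (L : ℕ) [NeZero L], N < L ^ 2 →
        ∀ k : ℕ, 1 ≤ k → (k : ℝ) ≤ r * Real.log ((L : ℝ) ^ 2) →
          (mixingTime (traceKernel (kcipKernel L (c / (L : ℝ) ^ 2)) (OmegaSet L k))
              (condDist (kcipStationary L (c / (L : ℝ) ^ 2)) (OmegaSet L k)) : ℝ) ≤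
            C * ((L : ℝ) ^ 2) ^ 3 * Real.log ((L : ℝ) ^ 2) ^ 3 ∧
          1 / spectralGap (traceKernel (kcipKernel L (c / (L : ℝ) ^ 2)) (OmegaSet L k))
              (condDist (kcipStationary L (c / (L : ℝ) ^ 2)) (OmegaSet L k)) ≤
            C * ((L : ℝ) ^ 2) ^ 3 * Real.log ((L : ℝ) ^ 2) ^ 2 := by
  obtain ⟨L₀, hL₀⟩ := eventually_sparse c r
  set A : ℝ := 1536 * (2 + c) / c with hA
  have hA0 : 0 < A := by positivity
  refine ⟨4 * A * r ^ 2 + 1, L₀ ^ 2, by positivity, ?_⟩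
  intro L _ hN k hk hkr
  obtain ⟨h3, hcL, hsparse⟩ := hL₀ L (lt_of_pow_lt_pow_left₀ 2 (Nat.zero_le L) hN)
  obtain ⟨hmix, hgap⟩ := trace_bounds (by omega) hc hcL hk (hsparse k hkr)
  rw [← hA] at hmix hgap
  have hk1 : (1 : ℝ) ≤ k := by exact_mod_cast hk
  have hn9 : (9 : ℝ) ≤ (L : ℝ) ^ 2 := by
    have : (3 : ℝ) ≤ L := by exact_mod_cast h3
    nlinarith
  refine ⟨hmix.trans ?_, hgap.trans ?_⟩ <;> clear hmix hgap hcL hsparse <;>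
    generalize (L : ℝ) ^ 2 = n at *
  · have hl : 1 ≤ Real.log n := by
      rw [Real.le_log_iff_exp_le (by linarith)]
      linarith [Real.exp_one_lt_d9]
    have h8 : Real.log 8 ≤ 3 := by
      rw [show (8 : ℝ) = 2 ^ 3 by norm_num, Real.log_pow]
      push_cast
      linarith [Real.log_two_lt_d9]
    rw [Real.log_mul (by norm_num) (by positivity), Real.log_pow]
    generalize Real.log n = l at *
    have h4 : Real.log 8 + k * l ≤ 4 * (r * l) * l := by
      have h5 : 1 ≤ r * l := one_le_mul_of_one_le_of_one_le hr hl
      have h6 : k * l ≤ r * l * l := mul_le_mul_of_nonneg_right hkr (by linarith)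
      nlinarith
    have hn3 : (1 : ℝ) ≤ n ^ 3 := one_le_pow₀ (by linarith)
    have hl3 : (1 : ℝ) ≤ l ^ 3 := one_le_pow₀ hl
    calc _ ≤ 4 * (r * l) * l * (A * (r * l) * n ^ 3) + 1 := by gcongr
      _ ≤ 4 * (r * l) * l * (A * (r * l) * n ^ 3) + n ^ 3 * l ^ 3 := by
          gcongr
          exact one_le_mul_of_one_le_of_one_le hn3 hl3
      _ = _ := by ring
  · have hl : 1 ≤ Real.log n := by
      rw [Real.le_log_iff_exp_le (by linarith)]
      linarith [Real.exp_one_lt_d9]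
    generalize Real.log n = l at *
    have hl2 : l ≤ l ^ 2 := by nlinarith
    have hr2 : A * r ≤ 4 * A * r ^ 2 + 1 := by
      have : r ≤ r ^ 2 := by nlinarith
      nlinarith
    calc A * k * n ^ 3 ≤ A * (r * l) * n ^ 3 := by gcongr
      _ = A * r * n ^ 3 * l := by ring
      _ ≤ _ := by gcongr

end KCIP
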